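/- There exists a constant C > 0 depending only on n and C₀ such that for all θ ∈ (0,1) and all r ≥ ε: ε^{n−2} r^{5−2n} ∫_{{x̄ ∈ ℝ^{n−1} : 4r/3 ≤ |x̄| ≤ 5r/3}} Σ_{i,j=1}^{n−1} (∂_nH_{ij}(x̄,0))² dx̄ ≤ θ ε^{n−2} Σ_{i,j=1}^{n−1} Σ_{1≤|α|≤d} h_{ij,α}² r^{2|α|+2−n} + C ∫_{{x̄ ∈ ℝ^{n−1} : r ≤ |x̄| ≤ 2r}} (−∂_nU_ε) U_ε S_{nn}²(x̄,0) dx̄ + (C/θ) ∫_{B⁺_{2r}(0)∖B⁺_r(0)} Σ_{i,j=1}^{n−1} Q_{ij,n}² dx. -/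

import Mathlib

open MeasureTheory

namespace S6

abbrev dg {n : ℕ} (m : Fin n →₀ ℕ) : ℕ := m.sum (fun _ e => e)

lemma dg_cast {n : ℕ} (m : Fin n →₀ ℕ) : (m.sum (fun _ e => (e : ℤ))) = ((dg m : ℕ) : ℤ) := by
  simp [dg, Finsupp.sum]

lemma poly_contDiff {n : ℕ} (p : MvPolynomial (Fin n) ℝ) :
    ContDiff ℝ (⊤ : ℕ∞) (fun x : Fin n → ℝ => MvPolynomial.eval x p) := by
  induction p using MvPolynomial.induction_on with
  | C a => simpa using contDiff_const
  | add p q hp hq => simpa using hp.add hq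
  | mul_X p i hp => 
    simp only [map_mul, MvPolynomial.eval_X]
    exact hp.mul (contDiff_apply ℝ ℝ i)

lemma poly_fderiv {n : ℕ} (c : Fin n) (x : Fin n → ℝ) (p : MvPolynomial (Fin n) ℝ) :
    fderiv ℝ (fun x : Fin n → ℝ => MvPolynomial.eval x p) x (Pi.single c 1)
      = MvPolynomial.eval x (MvPolynomial.pderiv c p) := by
  induction p using MvPolynomial.induction_on with
  | C a => simp
  | add p q hp hq =>
    simp only [map_add]
    rw [fderiv_fun_add ((poly_contDiff p).differentiable (by simp) x)
      ((poly_contDiff q).differentiable (by simp) x)]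
    simp [hp, hq]
  | mul_X p i hp =>
    simp only [map_mul, MvPolynomial.eval_X]
    rw [fderiv_fun_mul ((poly_contDiff p).differentiable (by simp) x) (differentiableAt_apply i x)]
    have h1 : fderiv ℝ (fun x : Fin n → ℝ => x i) x (Pi.single c 1) = if i = c then 1 else 0 := by
      have : fderiv ℝ (fun x : Fin n → ℝ => x i) x = ContinuousLinearMap.proj i :=
        (ContinuousLinearMap.proj (R := ℝ) (φ := fun _ : Fin n => ℝ) i).fderiv
      rw [this]
      simp [Pi.single_apply]
    simp only [add_apply, smul_apply, hp, h1,
      MvPolynomial.pderiv_mul, MvPolynomial.pderiv_X, map_add, map_mul, MvPolynomial.eval_X,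
      smul_eq_mul]
    by_cases h : i = c
    · subst h; simp; ring
    · simp [h, Pi.single_apply, Ne.symm h]; ring

lemma eval_mono_bd {n : ℕ} (x : Fin n → ℝ) (R : ℝ) (hx : ∀ c, |x c| ≤ R) (m : Fin n →₀ ℕ) (a : ℝ) :
    |MvPolynomial.eval x (MvPolynomial.monomial m a)| ≤ |a| * R ^ dg m := by
  rw [MvPolynomial.eval_monomial, abs_mul]
  apply mul_le_mul_of_nonneg_left _ (abs_nonneg _)
  rw [Finsupp.prod, dg, Finsupp.sum, Finset.abs_prod, ← Finset.prod_pow_eq_pow_sum]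
  apply Finset.prod_le_prod
  · intros; positivity
  · intro i _
    rw [abs_pow]
    exact pow_le_pow_left₀ (abs_nonneg _) (hx i) _

lemma dg_sub {n : ℕ} (m : Fin n →₀ ℕ) (c : Fin n) (h : m c ≠ 0) :
    dg (m - Finsupp.single c 1) + 1 = dg m := by
  have h2 : m = (m - Finsupp.single c 1) + Finsupp.single c 1 := by
    ext i
    by_cases hi : c = i
    · subst hi; simp; omega
    · simp [Finsupp.single_apply, hi]
  conv_rhs => rw [h2, dg, Finsupp.sum_add_index' (by simp) (by simp)]
  simp [dg]

lemma le_dg {n : ℕ} (m : Fin n →₀ ℕ) (c : Fin n) : m c ≤ dg m := by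
  by_cases h : m c = 0
  · simp [h]
  · exact Finset.single_le_sum (f := fun i => m i) (fun _ _ => Nat.zero_le _)
      (Finsupp.mem_support_iff.2 h)

lemma pd_mono_bd {n : ℕ} (x : Fin n → ℝ) (R : ℝ) (hR : 0 ≤ R) (hx : ∀ c, |x c| ≤ R)
    (m : Fin n →₀ ℕ) (a : ℝ) (c : Fin n) :
    |MvPolynomial.eval x (MvPolynomial.pderiv c (MvPolynomial.monomial m a))| * R
      ≤ |a| * dg m * R ^ dg m := by
  rw [MvPolynomial.pderiv_monomial]
  by_cases h : m c = 0
  · have h0 : 0 ≤ |a| * dg m * R ^ dg m := by positivity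
    simpa [h] using h0
  · calc _ ≤ (|a * m c| * R ^ dg (m - Finsupp.single c 1)) * R := by
          gcongr; exact eval_mono_bd x R hx _ _
      _ = |a| * m c * R ^ dg m := by
          rw [← dg_sub m c h, abs_mul, Nat.abs_cast]; ring
      _ ≤ _ := by gcongr; exact le_dg m c

lemma pd2_mono_bd {n : ℕ} (x : Fin n → ℝ) (R : ℝ) (hR : 0 ≤ R) (hx : ∀ c, |x c| ≤ R)
    (m : Fin n →₀ ℕ) (a : ℝ) (c : Fin n) :
    |MvPolynomial.eval x (MvPolynomial.pderiv c (MvPolynomial.pderiv c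
      (MvPolynomial.monomial m a)))| * R ^ 2
      ≤ |a| * (dg m : ℝ) ^ 2 * R ^ dg m := by
  rw [MvPolynomial.pderiv_monomial]
  by_cases h : m c = 0
  · have h0 : 0 ≤ |a| * (dg m : ℝ) ^ 2 * R ^ dg m := by positivity
    simpa [h] using h0
  · have h1 := pd_mono_bd x R hR hx (m - Finsupp.single c 1) (a * m c) c
    have h2 := dg_sub m c h
    calc _ = (|MvPolynomial.eval x (MvPolynomial.pderiv c (MvPolynomial.monomial
            (m - Finsupp.single c 1) (a * m c)))| * R) * R := by ring
      _ ≤ (|a * m c| * dg (m - Finsupp.single c 1) * R ^ dg (m - Finsupp.single c 1)) * R := by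
          gcongr
      _ = |a| * (m c * dg (m - Finsupp.single c 1)) * R ^ dg m := by
          rw [← h2, abs_mul, Nat.abs_cast]; ring
      _ ≤ |a| * (dg m * dg m) * R ^ dg m := by
          gcongr
          · exact le_dg m c
          · omega
      _ = _ := by ring

lemma pd_bd {n d : ℕ} (p : MvPolynomial (Fin n) ℝ) (hp : ∀ m ∈ p.support, dg m ≤ d)
    (x : Fin n → ℝ) (r : ℝ) (hr : 0 < r) (hx : ∀ c, |x c| ≤ 2 * r) (c : Fin n) :
    |MvPolynomial.eval x (MvPolynomial.pderiv c p)| * r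
      ≤ (d * 2 ^ d) * ∑ m ∈ p.support, |p.coeff m| * r ^ dg m := by
  conv_lhs => rw [← MvPolynomial.support_sum_monomial_coeff p]
  rw [map_sum, map_sum]
  calc _ ≤ (∑ m ∈ p.support, |MvPolynomial.eval x (MvPolynomial.pderiv c
          (MvPolynomial.monomial m (p.coeff m)))|) * (2 * r) := by
        gcongr
        · exact Finset.abs_sum_le_sum_abs _ _
        · linarith
    _ = ∑ m ∈ p.support, |MvPolynomial.eval x (MvPolynomial.pderiv c
          (MvPolynomial.monomial m (p.coeff m)))| * (2 * r) := by rw [Finset.sum_mul]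
    _ ≤ ∑ m ∈ p.support, |p.coeff m| * dg m * (2 * r) ^ dg m :=
        Finset.sum_le_sum fun m _ => pd_mono_bd x (2 * r) (by positivity) hx _ _ _
    _ ≤ ∑ m ∈ p.support, (d * 2 ^ d) * (|p.coeff m| * r ^ dg m) := by
        refine Finset.sum_le_sum fun m hm => ?_
        have h1 : (dg m : ℝ) ≤ d := by exact_mod_cast hp m hm
        have h2 : (2 : ℝ) ^ dg m ≤ 2 ^ d := pow_le_pow_right₀ (by norm_num) (hp m hm)
        rw [mul_pow]
        calc _ = |p.coeff m| * r ^ dg m * (dg m * 2 ^ dg m) := by ring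
          _ ≤ |p.coeff m| * r ^ dg m * (d * 2 ^ d) := by gcongr
          _ = _ := by ring
    _ = _ := by rw [Finset.mul_sum]

lemma pd2_bd {n d : ℕ} (p : MvPolynomial (Fin n) ℝ) (hp : ∀ m ∈ p.support, dg m ≤ d)
    (x : Fin n → ℝ) (r : ℝ) (hr : 0 < r) (hx : ∀ c, |x c| ≤ 2 * r) (c : Fin n) :
    |MvPolynomial.eval x (MvPolynomial.pderiv c (MvPolynomial.pderiv c p))| * r ^ 2
      ≤ (d ^ 2 * 2 ^ d) * ∑ m ∈ p.support, |p.coeff m| * r ^ dg m := by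
  conv_lhs => rw [← MvPolynomial.support_sum_monomial_coeff p]
  rw [map_sum, map_sum, map_sum]
  calc _ ≤ (∑ m ∈ p.support, |MvPolynomial.eval x (MvPolynomial.pderiv c (MvPolynomial.pderiv c
          (MvPolynomial.monomial m (p.coeff m))))|) * (2 * r) ^ 2 := by
        gcongr
        · exact Finset.abs_sum_le_sum_abs _ _
        · linarith
    _ = ∑ m ∈ p.support, |MvPolynomial.eval x (MvPolynomial.pderiv c (MvPolynomial.pderiv c
          (MvPolynomial.monomial m (p.coeff m))))| * (2 * r) ^ 2 := by rw [Finset.sum_mul]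
    _ ≤ ∑ m ∈ p.support, |p.coeff m| * (dg m : ℝ) ^ 2 * (2 * r) ^ dg m :=
        Finset.sum_le_sum fun m _ => pd2_mono_bd x (2 * r) (by positivity) hx _ _ _
    _ ≤ ∑ m ∈ p.support, (d ^ 2 * 2 ^ d) * (|p.coeff m| * r ^ dg m) := by
        refine Finset.sum_le_sum fun m hm => ?_
        have h1 : (dg m : ℝ) ≤ d := by exact_mod_cast hp m hm
        have h2 : (2 : ℝ) ^ dg m ≤ 2 ^ d := pow_le_pow_right₀ (by norm_num) (hp m hm)
        rw [mul_pow]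
        calc _ = |p.coeff m| * r ^ dg m * ((dg m : ℝ) ^ 2 * 2 ^ dg m) := by ring
          _ ≤ |p.coeff m| * r ^ dg m * (d ^ 2 * 2 ^ d) := by gcongr
          _ = _ := by ring
    _ = _ := by rw [Finset.mul_sum]

/-- bound on the number of monomials -/
lemma card_bd {n d : ℕ} (p : MvPolynomial (Fin n) ℝ) (hp : ∀ m ∈ p.support, dg m ≤ d) :
    p.support.card ≤ (d + 1) ^ n := by
  classical
  have : p.support.card ≤ (Fintype.piFinset (fun _ : Fin n => Finset.range (d + 1))).card := by
    apply Finset.card_le_card_of_injOn (fun m : Fin n →₀ ℕ => (fun i => m i))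
    · intro m hm
      simp only [Finset.mem_coe, Fintype.mem_piFinset, Finset.mem_range]
      intro a
      have := le_dg m a
      have := hp m hm
      omega
    · intro a _ b _ h
      exact Finsupp.ext fun i => congrFun h i
  simpa using this

lemma cs_poly {n d : ℕ} (p : MvPolynomial (Fin n) ℝ) (hp : ∀ m ∈ p.support, dg m ≤ d) (r : ℝ) :
    (∑ m ∈ p.support, |p.coeff m| * r ^ dg m) ^ 2
      ≤ ((d + 1 : ℕ) : ℝ) ^ n * ∑ m ∈ p.support, (p.coeff m) ^ 2 * r ^ (2 * dg m) := by
  refine (sq_sum_le_card_mul_sum_sq).trans ?_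
  have h : (p.support.card : ℝ) ≤ ((d + 1 : ℕ) : ℝ) ^ n := by exact_mod_cast card_bd p hp
  have e : ∀ m, (|p.coeff m| * r ^ dg m) ^ 2 = (p.coeff m) ^ 2 * r ^ (2 * dg m) := by
    intro m; rw [mul_pow, sq_abs, ← pow_mul, mul_comm (dg m)]
  simp only [e]
  gcongr
  refine Finset.sum_nonneg fun m _ => ?_
  rw [pow_mul]
  positivity

/-- embedding of the slice -/
def emb {k : ℕ} (x' : Fin k → ℝ) (t : ℝ) : Fin (k + 1) → ℝ :=
  fun a => if h : (a : ℕ) < k then x' ⟨(a : ℕ), h⟩ else t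

lemma emb_last {k : ℕ} (x' : Fin k → ℝ) (t : ℝ) : emb x' t (Fin.last k) = t := by
  simp [emb]

lemma emb_cast {k : ℕ} (x' : Fin k → ℝ) (t : ℝ) (i : Fin k) : emb x' t i.castSucc = x' i := by
  simp [emb]

lemma emb_eq {k : ℕ} (x' : Fin k → ℝ) (t : ℝ) :
    emb x' t = emb x' 0 + t • (Pi.single (Fin.last k) (1 : ℝ) : Fin (k + 1) → ℝ) := by
  ext a
  refine Fin.lastCases ?_ (fun i => ?_) a
  · simp [emb_last]
  · simp [emb_cast, Fin.castSucc_ne_last]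

lemma emb_hasDerivAt {k : ℕ} (x' : Fin k → ℝ) (t : ℝ) :
    HasDerivAt (emb x') (Pi.single (Fin.last k) (1 : ℝ) : Fin (k + 1) → ℝ) t := by
  have : emb x' = fun t => emb x' 0 + t • (Pi.single (Fin.last k) (1 : ℝ) : Fin (k + 1) → ℝ) := by
    funext t; exact emb_eq x' t
  rw [this]
  simpa using ((hasDerivAt_id t).smul_const
    (Pi.single (Fin.last k) (1 : ℝ) : Fin (k + 1) → ℝ)).const_add (emb x' 0)

lemma comp_emb {k : ℕ} {F : Type*} [NormedAddCommGroup F] [NormedSpace ℝ F]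
    (f : (Fin (k + 1) → ℝ) → F) (x' : Fin k → ℝ) (t : ℝ)
    (hf : DifferentiableAt ℝ f (emb x' t)) :
    HasDerivAt (fun s => f (emb x' s))
      (fderiv ℝ f (emb x' t) (Pi.single (Fin.last k) 1)) t :=
  hf.hasFDerivAt.comp_hasDerivAt t (emb_hasDerivAt x' t)

lemma emb_continuous {k : ℕ} : Continuous (fun z : (Fin k → ℝ) × ℝ => emb z.1 z.2) := by
  refine continuous_pi fun a => ?_
  refine Fin.lastCases ?_ (fun i => ?_) a
  · simpa only [emb_last] using continuous_snd
  · simp only [emb_cast]; fun_prop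

lemma sum_sq_emb {k : ℕ} (x' : Fin k → ℝ) (t : ℝ) :
    ∑ a, emb x' t a ^ 2 = ∑ i, x' i ^ 2 + t ^ 2 := by
  rw [Fin.sum_univ_castSucc]
  simp [emb_last, emb_cast]

/-- denominator -/
def Dn {k : ℕ} (ε : ℝ) (y : Fin (k + 1) → ℝ) : ℝ :=
  (ε + y (Fin.last k)) ^ 2 + ∑ i : Fin k, y i.castSucc ^ 2

lemma Dn_eq {k : ℕ} (ε : ℝ) (y : Fin (k + 1) → ℝ) :
    (ε + y (Fin.last k)) ^ 2 + (∑ i : Fin (k + 1), if (i : ℕ) < k then y i ^ 2 else 0)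
      = Dn ε y := by
  rw [Fin.sum_univ_castSucc]
  simp [Dn]

lemma Dn_pos {k : ℕ} {ε : ℝ} (hε : 0 < ε) {y : Fin (k + 1) → ℝ} (hy : 0 ≤ y (Fin.last k)) :
    0 < Dn ε y := by
  have : 0 ≤ ∑ i : Fin k, y i.castSucc ^ 2 := Finset.sum_nonneg fun i _ => sq_nonneg _
  unfold Dn
  positivity

lemma Dn_hasFDerivAt {k : ℕ} (ε : ℝ) (y : Fin (k + 1) → ℝ) :
    ∃ L : (Fin (k + 1) → ℝ) →L[ℝ] ℝ, HasFDerivAt (Dn ε) L y ∧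
      L (Pi.single (Fin.last k) 1) = 2 * (ε + y (Fin.last k)) ∧
      ∀ i : Fin k, L (Pi.single i.castSucc 1) = 2 * y i.castSucc := by
  have hp : ∀ a : Fin (k + 1), HasFDerivAt (fun y : Fin (k + 1) → ℝ => y a)
      (ContinuousLinearMap.proj (R := ℝ) (φ := fun _ : Fin (k + 1) => ℝ) a) y := fun a =>
    (ContinuousLinearMap.proj (R := ℝ) (φ := fun _ : Fin (k + 1) => ℝ) a).hasFDerivAt
  have h1 := ((hp (Fin.last k)).const_add ε).pow 2
  have h2 := HasFDerivAt.fun_sum (u := Finset.univ) (fun (i : Fin k) _ => (hp i.castSucc).pow 2)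
  refine ⟨_, h1.add h2, ?_, ?_⟩
  · simp [Fin.castSucc_ne_last]; ring
  · intro i
    simp [Pi.single_apply, (Fin.castSucc_ne_last _).symm]

/-- the bubble -/
noncomputable def Ub {k : ℕ} (ε p : ℝ) (y : Fin (k + 1) → ℝ) : ℝ := (ε / Dn ε y) ^ p

lemma Ub_pos {k : ℕ} {ε : ℝ} (p : ℝ) (hε : 0 < ε) {y : Fin (k + 1) → ℝ}
    (hy : 0 ≤ y (Fin.last k)) : 0 < Ub ε p y := by
  have := Dn_pos hε hy
  unfold Ub; positivity

lemma Ub_hasFDerivAt {k : ℕ} {ε : ℝ} (p : ℝ) (hε : 0 < ε) {y : Fin (k + 1) → ℝ}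
    (hy : 0 ≤ y (Fin.last k)) :
    DifferentiableAt ℝ (Ub ε p) y ∧
    fderiv ℝ (Ub ε p) y (Pi.single (Fin.last k) 1)
      = - (2 * p * (ε + y (Fin.last k)) / Dn ε y * Ub ε p y) ∧
    ∀ i : Fin k, fderiv ℝ (Ub ε p) y (Pi.single i.castSucc 1)
      = - (2 * p * y i.castSucc / Dn ε y * Ub ε p y) := by
  obtain ⟨L, hL, h1, h2⟩ := Dn_hasFDerivAt ε y
  have hD := Dn_pos hε hy
  have hf : HasDerivAt (fun s : ℝ => (ε / s) ^ p) (- (p / Dn ε y * (ε / Dn ε y) ^ p)) (Dn ε y) := by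
    have ha : HasDerivAt (fun s : ℝ => ε / s) (ε * (-(Dn ε y ^ 2)⁻¹)) (Dn ε y) := by
      simpa [div_eq_mul_inv] using (hasDerivAt_inv hD.ne').const_mul ε
    have hb := ha.rpow_const (p := p) (Or.inl (by positivity))
    convert hb using 1
    rw [Real.rpow_sub_one (by positivity)]
    field_simp
  have hU : HasFDerivAt (Ub ε p) _ y := hf.comp_hasFDerivAt y hL
  refine ⟨hU.differentiableAt, ?_, ?_⟩
  · rw [hU.fderiv]
    simp only [smul_apply, h1, smul_eq_mul, Ub]; ring
  · intro i
    rw [hU.fderiv]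
    simp only [smul_apply, h2, smul_eq_mul, Ub]; ring

lemma Dn_continuous {k : ℕ} (ε : ℝ) : Continuous (Dn (k := k) ε) := by
  unfold Dn; fun_prop

lemma Ub_contOn {k : ℕ} {ε : ℝ} (p : ℝ) (hε : 0 < ε) :
    ContinuousOn (Ub (k := k) ε p) {y | 0 ≤ y (Fin.last k)} := fun _ hy =>
  (Ub_hasFDerivAt p hε hy).1.continuousAt.continuousWithinAt

lemma dUb_contOn {k : ℕ} {ε : ℝ} (p : ℝ) (hε : 0 < ε) (a : Fin (k + 1)) :
    ContinuousOn (fun y => fderiv ℝ (Ub (k := k) ε p) y (Pi.single a 1))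
      {y | 0 ≤ y (Fin.last k)} := by
  refine Fin.lastCases ?_ (fun i => ?_) a
  · refine ContinuousOn.congr (f := fun y => - (2 * p * (ε + y (Fin.last k)) / Dn ε y * Ub ε p y))
      ?_ (fun y hy => (Ub_hasFDerivAt p hε hy).2.1)
    refine ((ContinuousOn.div (by fun_prop) (Dn_continuous ε).continuousOn
      fun y hy => (Dn_pos hε hy).ne').mul (Ub_contOn p hε)).neg
  · refine ContinuousOn.congr (f := fun y => - (2 * p * y i.castSucc / Dn ε y * Ub ε p y))
      ?_ (fun y hy => (Ub_hasFDerivAt p hε hy).2.2 i)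
    refine ((ContinuousOn.div (by fun_prop) (Dn_continuous ε).continuousOn
      fun y hy => (Dn_pos hε hy).ne').mul (Ub_contOn p hε)).neg

lemma Dn_emb {k : ℕ} (ε : ℝ) (x' : Fin k → ℝ) (t : ℝ) :
    Dn ε (emb x' t) = (ε + t) ^ 2 + ∑ i, x' i ^ 2 := by
  simp [Dn, emb_last, emb_cast]

lemma Ub_bds {k : ℕ} {ε p r t : ℝ} (hp : 0 ≤ p) (hε : 0 < ε) (hεr : ε ≤ r) (ht : 0 ≤ t)
    (htr : t ≤ r) (x' : Fin k → ℝ) (h1 : r ^ 2 ≤ ∑ i, x' i ^ 2)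
    (h2 : ∑ i, x' i ^ 2 ≤ 4 * r ^ 2) :
    Ub ε p (emb x' t) ≤ (ε / r ^ 2) ^ p ∧
    |fderiv ℝ (Ub ε p) (emb x' t) (Pi.single (Fin.last k) 1)| * r ≤ 4 * p * (ε / r ^ 2) ^ p ∧
    (∀ i : Fin k, |fderiv ℝ (Ub ε p) (emb x' t) (Pi.single i.castSucc 1)| * r
      ≤ 4 * p * (ε / r ^ 2) ^ p) := by
  have hr : 0 < r := by linarith
  have hy : 0 ≤ emb x' t (Fin.last k) := by rw [emb_last]; exact ht
  have hD := Dn_pos hε hy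
  have hU := Ub_pos p hε hy
  have hDr : r ^ 2 ≤ Dn ε (emb x' t) := by rw [Dn_emb]; nlinarith [sq_nonneg (ε + t)]
  have hW : Ub ε p (emb x' t) ≤ (ε / r ^ 2) ^ p := by
    unfold Ub
    apply Real.rpow_le_rpow (by positivity) _ hp
    gcongr
  obtain ⟨-, e1, e2⟩ := Ub_hasFDerivAt p hε hy
  have key : ∀ w : ℝ, |w| ≤ 2 * r →
      |-(2 * p * w / Dn ε (emb x' t) * Ub ε p (emb x' t))| * r ≤ 4 * p * (ε / r ^ 2) ^ p := by
    intro w hw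
    rw [abs_neg, abs_mul, abs_div, abs_mul, abs_of_pos hD, abs_of_pos hU,
      abs_of_nonneg (by positivity : 0 ≤ 2 * p)]
    calc _ ≤ 2 * p * (2 * r) / r ^ 2 * (ε / r ^ 2) ^ p * r := by gcongr
      _ = _ := by field_simp; ring
  refine ⟨hW, ?_, fun i => ?_⟩
  · rw [e1]; apply key; rw [emb_last, abs_of_nonneg (by linarith)]; linarith
  · rw [e2]; apply key; rw [emb_cast]
    apply abs_le_of_sq_le_sq _ (by linarith)
    have : x' i ^ 2 ≤ ∑ i, x' i ^ 2 :=
      Finset.single_le_sum (f := fun i => x' i ^ 2) (fun _ _ => sq_nonneg _) (Finset.mem_univ i)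
    nlinarith

lemma Ub_bdry {k : ℕ} {ε p r : ℝ} (hp : 0 ≤ p) (hε : 0 < ε) (hεr : ε ≤ r)
    (x' : Fin k → ℝ) (h1 : r ^ 2 ≤ ∑ i, x' i ^ 2) (h2 : ∑ i, x' i ^ 2 ≤ 4 * r ^ 2) :
    (ε / (5 * r ^ 2)) ^ p ≤ Ub ε p (emb x' 0) ∧
    (fderiv ℝ (Ub ε p) (emb x' 0) (Pi.single (Fin.last k) 1)) ^ 2 * r ≤
      2 * p * (-(fderiv ℝ (Ub ε p) (emb x' 0) (Pi.single (Fin.last k) 1)) * Ub ε p (emb x' 0)) := by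
  have hr : 0 < r := by linarith
  have hy : 0 ≤ emb x' 0 (Fin.last k) := by rw [emb_last]
  have hD := Dn_pos hε hy
  have hU := Ub_pos p hε hy
  have hDr : r ^ 2 ≤ Dn ε (emb x' 0) := by rw [Dn_emb]; nlinarith [sq_nonneg (ε + 0)]
  have hDr2 : Dn ε (emb x' 0) ≤ 5 * r ^ 2 := by rw [Dn_emb]; nlinarith
  obtain ⟨-, e1, -⟩ := Ub_hasFDerivAt p hε hy
  constructor
  · unfold Ub
    apply Real.rpow_le_rpow (by positivity) _ hp
    gcongr
  · rw [e1, emb_last, add_zero]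
    set D := Dn ε (emb x' 0)
    set u := Ub ε p (emb x' 0)
    have : ε / D * r ≤ 1 := by
      rw [div_mul_eq_mul_div, div_le_one hD]; nlinarith
    have h3 : 0 ≤ (2 * p) ^ 2 * (ε / D) * u ^ 2 := by positivity
    calc _ = (2 * p) ^ 2 * (ε / D) * u ^ 2 * (ε / D * r) := by ring
      _ ≤ (2 * p) ^ 2 * (ε / D) * u ^ 2 * 1 := by gcongr
      _ = _ := by ring

/-- conformal Killing combination -/
noncomputable def comb {n : ℕ} (g : Fin n → Fin n → ℝ) (a b : Fin n) : ℝ :=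
  g a b + g b a - 2 / (n : ℝ) * (∑ c : Fin n, g c c) * (if a = b then 1 else 0)

lemma comb_bd {n : ℕ} (hn : 0 < n) (g : Fin n → Fin n → ℝ) (B : ℝ) (hB : ∀ a b, |g a b| ≤ B)
    (a b : Fin n) : |comb g a b| ≤ 4 * B := by
  have hn' : (0 : ℝ) < n := by exact_mod_cast hn
  have hB0 : 0 ≤ B := (abs_nonneg _).trans (hB a b)
  have h1 : |∑ c : Fin n, g c c| ≤ n * B := by
    calc _ ≤ ∑ c : Fin n, |g c c| := Finset.abs_sum_le_sum_abs _ _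
      _ ≤ ∑ c : Fin n, B := Finset.sum_le_sum fun c _ => hB c c
      _ = n * B := by simp
  have h2 : |2 / (n : ℝ) * (∑ c : Fin n, g c c) * (if a = b then 1 else 0)| ≤ 2 * B := by
    rw [abs_mul, abs_mul, abs_of_pos (by positivity : (0 : ℝ) < 2 / n)]
    have h3 : |(if a = b then (1 : ℝ) else 0)| ≤ 1 := by split_ifs <;> simp
    calc _ ≤ 2 / (n : ℝ) * (n * B) * 1 := by gcongr
      _ = 2 * B := by field_simp
  unfold comb
  have := hB a b
  have := hB b a
  rw [abs_le] at *
  constructor <;> linarith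

lemma comb_mul {n : ℕ} (g : Fin n → Fin n → ℝ) (r : ℝ) (a b : Fin n) :
    comb g a b * r = comb (fun a b => g a b * r) a b := by
  simp only [comb, ← Finset.sum_mul]; ring

lemma comb_fderiv {n : ℕ} {E : Type*} [NormedAddCommGroup E] [NormedSpace ℝ E]
    (g : Fin n → Fin n → E → ℝ) (x v : E) (hg : ∀ a b, DifferentiableAt ℝ (g a b) x) (a b : Fin n) :
    fderiv ℝ (fun y => comb (fun a b => g a b y) a b) x v
      = comb (fun a b => fderiv ℝ (g a b) x v) a b := by
  have h := (((hg a b).hasFDerivAt.add (hg b a).hasFDerivAt).sub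
    (((HasFDerivAt.fun_sum (u := Finset.univ) fun c _ => (hg c c).hasFDerivAt).const_mul
      (2 / (n : ℝ))).mul_const (if a = b then (1 : ℝ) else 0)))
  have h' : HasFDerivAt (fun y => comb (fun a b => g a b y) a b) _ x := h
  rw [h'.fderiv]
  by_cases hab : a = b
  · simp [comb, hab]
  · simp [comb, hab]

lemma comb_contDiff {n : ℕ} {E : Type*} [NormedAddCommGroup E] [NormedSpace ℝ E]
    (g : Fin n → Fin n → E → ℝ) (hg : ∀ a b, ContDiff ℝ (⊤ : ℕ∞) (g a b)) (a b : Fin n) :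
    ContDiff ℝ (⊤ : ℕ∞) (fun y => comb (fun a b => g a b y) a b) := by
  unfold comb
  have := hg a b
  have := hg b a
  have h : ContDiff ℝ (⊤ : ℕ∞) (fun y => ∑ c, g c c y) := ContDiff.sum fun c _ => hg c c
  fun_prop

lemma fd_contDiff {n : ℕ} (f : (Fin n → ℝ) → ℝ) (hf : ContDiff ℝ (⊤ : ℕ∞) f) (v : Fin n → ℝ) :
    ContDiff ℝ (⊤ : ℕ∞) (fun y => fderiv ℝ f y v) :=
  (hf.fderiv_right (m := (⊤ : ℕ∞)) (by simp)).clm_apply contDiff_const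

lemma it_fderiv {n : ℕ} (V : (Fin n → ℝ) → Fin n → ℝ) (hV : ContDiff ℝ (⊤ : ℕ∞) V) (k : ℕ)
    (dirs : Fin k → Fin n) (a b : Fin n) (x : Fin n → ℝ) :
    fderiv ℝ (fun y => iteratedFDeriv ℝ k V y (fun m => Pi.single (dirs m) 1) b) x (Pi.single a 1)
      = iteratedFDeriv ℝ (k + 1) V x
          (fun m => Pi.single ((Fin.cons a dirs : Fin (k + 1) → Fin n) m) 1) b := by
  have hd : DifferentiableAt ℝ (iteratedFDeriv ℝ k V) x :=
    (hV.differentiable_iteratedFDeriv (by exact_mod_cast WithTop.coe_lt_top k)) x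
  have h1 := hd.hasFDerivAt
  have h2 := ((ContinuousLinearMap.proj (R := ℝ) (φ := fun _ : Fin n => ℝ) b).comp
    (ContinuousMultilinearMap.apply ℝ (fun _ : Fin k => Fin n → ℝ) (Fin n → ℝ)
      (fun m => Pi.single (dirs m) 1))).hasFDerivAt.comp x h1
  have h3 : HasFDerivAt (fun y => iteratedFDeriv ℝ k V y (fun m => Pi.single (dirs m) 1) b) _ x := h2
  rw [h3.fderiv, iteratedFDeriv_succ_apply_left]
  simp only [Fin.cons_zero, ContinuousLinearMap.comp_apply]
  rfl

lemma D1_eq {n : ℕ} (V : (Fin n → ℝ) → Fin n → ℝ) (hV : ContDiff ℝ (⊤ : ℕ∞) V) (a b : Fin n)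
    (x : Fin n → ℝ) : fderiv ℝ (fun w => V w b) x (Pi.single a 1)
      = iteratedFDeriv ℝ 1 V x
          (fun m => Pi.single ((Fin.cons a Fin.elim0 : Fin 1 → Fin n) m) 1) b := by
  rw [← it_fderiv V hV 0 Fin.elim0 a b x]
  rfl

lemma V_contDiff {n : ℕ} (V : (Fin n → ℝ) → Fin n → ℝ) (hV : ContDiff ℝ (⊤ : ℕ∞) V) (b : Fin n) :
    ContDiff ℝ (⊤ : ℕ∞) (fun w => V w b) := (contDiff_pi.1 hV) b

lemma V_bds {n : ℕ} (V : (Fin n → ℝ) → Fin n → ℝ) (hV : ContDiff ℝ (⊤ : ℕ∞) V)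
    (x : Fin n → ℝ) (e : Fin n) (r B : ℝ) (hr : 0 < r)
    (hB : ∀ k : ℕ, k ≤ 2 → ∀ dirs : Fin (k + 1) → Fin n,
      ‖iteratedFDeriv ℝ (k + 1) V x (fun m => Pi.single (dirs m) 1)‖ * r ^ k ≤ B) (a b : Fin n) :
    |fderiv ℝ (fun w => V w b) x (Pi.single a 1)| ≤ B ∧
    |fderiv ℝ (fun y => fderiv ℝ (fun w => V w b) y (Pi.single a 1)) x (Pi.single e 1)| * r ≤ B ∧
    |fderiv ℝ (fun z => fderiv ℝ (fun y => fderiv ℝ (fun w => V w b) y (Pi.single a 1))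
      z (Pi.single e 1)) x (Pi.single e 1)| * r ^ 2 ≤ B := by
  have key : ∀ k : ℕ, k ≤ 2 → ∀ dirs : Fin (k + 1) → Fin n,
      |iteratedFDeriv ℝ (k + 1) V x (fun m => Pi.single (dirs m) 1) b| * r ^ k ≤ B := by
    intro k hk dirs
    refine le_trans ?_ (hB k hk dirs)
    gcongr
    exact norm_le_pi_norm (iteratedFDeriv ℝ (k + 1) V x (fun m => Pi.single (dirs m) 1)) b
  refine ⟨?_, ?_, ?_⟩
  · rw [D1_eq V hV]
    simpa using key 0 (by norm_num) (Fin.cons a Fin.elim0)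
  · simp only [D1_eq V hV]
    rw [it_fderiv V hV]
    simpa using key 1 (by norm_num) (Fin.cons e (Fin.cons a Fin.elim0))
  · simp only [D1_eq V hV, it_fderiv V hV]
    exact key 2 (by norm_num) _

/-- V-bounds from (iii) -/
lemma zpow_bd {ε r R : ℝ} (hε : 0 < ε) (hr : ε ≤ r) (h1 : r ≤ R) (h2 : R ≤ 2 * r) (m k d : ℕ)
    (hm : m ≤ d) :
    (ε + R) ^ ((m : ℤ) + 1 - ((k + 1 : ℕ) : ℤ)) * r ^ k ≤ 3 ^ d * r ^ m := by
  have hr0 : 0 < r := by linarith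
  have hR0 : 0 < ε + R := by linarith
  have e : (m : ℤ) + 1 - ((k + 1 : ℕ) : ℤ) = (m : ℤ) - (k : ℤ) := by push_cast; ring
  rw [e, zpow_sub₀ (by linarith), zpow_natCast, zpow_natCast, div_mul_eq_mul_div,
    div_le_iff₀ (by positivity)]
  calc (ε + R) ^ m * r ^ k ≤ (3 * r) ^ m * (ε + R) ^ k := by
        gcongr <;> linarith
    _ = 3 ^ m * r ^ m * (ε + R) ^ k := by rw [mul_pow]
    _ ≤ 3 ^ d * r ^ m * (ε + R) ^ k := by
        gcongr
        all_goals first | positivity | norm_num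

lemma T_bdry {k : ℕ} (V : (Fin (k + 1) → ℝ) → Fin (k + 1) → ℝ) (hV : ContDiff ℝ (⊤ : ℕ∞) V)
    (h0 : ∀ x : Fin (k + 1) → ℝ, x (Fin.last k) = 0 → V x (Fin.last k) = 0)
    (x : Fin (k + 1) → ℝ) (hx : x (Fin.last k) = 0) (i : Fin k) :
    fderiv ℝ (fun w => V w (Fin.last k)) x (Pi.single i.castSucc 1) = 0 := by
  have hd : DifferentiableAt ℝ (fun w => V w (Fin.last k)) x :=
    (V_contDiff V hV _).differentiable (by simp) x
  rw [← hd.lineDeriv_eq_fderiv, lineDeriv]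
  have : (fun t : ℝ => V (x + t • Pi.single i.castSucc 1) (Fin.last k)) = fun _ => 0 := by
    funext t
    apply h0
    simp [hx, (Fin.castSucc_ne_last _).symm]
  rw [this]; simp

lemma emb_mp {k : ℕ} : MeasurePreserving (fun z : (Fin k → ℝ) × ℝ => emb z.1 z.2) := by
  have h1 := (volume_preserving_piFinSuccAbove (fun _ : Fin (k + 1) => ℝ) (Fin.last k)).symm
  have h2 := (Measure.measurePreserving_swap (μ := (volume : Measure (Fin k → ℝ)))
    (ν := (volume : Measure ℝ)))
  have h3 := h1.comp h2
  suffices h4 : (fun z : (Fin k → ℝ) × ℝ => emb z.1 z.2)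
      = (MeasurableEquiv.piFinSuccAbove (fun _ : Fin (k + 1) => ℝ) (Fin.last k)).symm
        ∘ Prod.swap by
    rw [h4]; exact h3
  funext z
  ext a
  refine Fin.lastCases ?_ (fun i => ?_) a
  · simp [emb_last, MeasurableEquiv.piFinSuccAbove, Fin.insertNthEquiv]
  · simp [emb_cast, MeasurableEquiv.piFinSuccAbove, Fin.insertNthEquiv]

lemma emb_me {k : ℕ} : MeasurableEmbedding (fun z : (Fin k → ℝ) × ℝ => emb z.1 z.2) := by
  refine emb_continuous.measurableEmbedding ?_
  rintro ⟨a, s⟩ ⟨b, t⟩ h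
  ext i
  · simpa [emb_cast] using congrFun h i.castSucc
  · simpa [emb_last] using congrFun h (Fin.last k)

/-- annulus -/
def Ann (k : ℕ) (s t : ℝ) : Set (Fin k → ℝ) :=
  {x' | s ≤ Real.sqrt (∑ i, x' i ^ 2) ∧ Real.sqrt (∑ i, x' i ^ 2) ≤ t}

lemma Ann_sub_Icc (k : ℕ) (s t : ℝ) : Ann k s t ⊆ Set.Icc (fun _ => -t) (fun _ => t) := by
  rintro x ⟨_, h2⟩
  have : ∀ i, |x i| ≤ t := by
    intro i
    refine le_trans ?_ h2
    apply Real.abs_le_sqrt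
    exact Finset.single_le_sum (f := fun i => x i ^ 2) (fun _ _ => sq_nonneg _) (Finset.mem_univ i)
  exact ⟨fun i => (abs_le.1 (this i)).1, fun i => (abs_le.1 (this i)).2⟩

lemma Ann_compact (k : ℕ) (s t : ℝ) : IsCompact (Ann k s t) := by
  refine isCompact_Icc.of_isClosed_subset ?_ (Ann_sub_Icc k s t)
  have hc : Continuous (fun x' : Fin k → ℝ => Real.sqrt (∑ i, x' i ^ 2)) := by fun_prop
  exact (isClosed_le continuous_const hc).inter (isClosed_le hc continuous_const)

lemma Ann_vol (k : ℕ) (r s t : ℝ) (hr : 0 < r) (ht : t ≤ 2 * r) :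
    (volume (Ann k s t)).toReal ≤ (4 * r) ^ k := by
  have h1 : Ann k s t ⊆ Set.Icc (fun _ => -(2 * r)) (fun _ => 2 * r) :=
    (Ann_sub_Icc k s t).trans (Set.Icc_subset_Icc (fun _ => by simp; linarith) (fun _ => ht))
  have h2 := ENNReal.toReal_mono (isCompact_Icc.measure_lt_top (μ := volume)).ne
    (measure_mono (μ := volume) h1)
  refine h2.trans ?_
  rw [Real.volume_Icc_pi_toReal (fun _ => by linarith)]
  simp only [Finset.prod_const, Finset.card_univ, Fintype.card_fin]
  apply le_of_eq; congr 1; ring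

lemma integ {k : ℕ} {r δ : ℝ} (hr : 0 < r) (hδ : 0 < δ) (hδ1 : δ ≤ 1)
    (L P : (Fin k → ℝ) → ℝ) (q : (Fin (k + 1) → ℝ) → ℝ) (c1 c2 E : ℝ) (hc1 : 0 ≤ c1)
    (hc2 : 0 ≤ c2) (hE : 0 ≤ E) (hL : Continuous L) (hP : Continuous P)
    (hP0 : ∀ x', 0 ≤ P x') (hq : ContinuousOn q {x | 0 ≤ x (Fin.last k)}) (hq0 : ∀ x, 0 ≤ q x)
    (hpt : ∀ x' ∈ Ann k (4 * r / 3) (5 * r / 3), ∀ t, 0 ≤ t → t ≤ δ * r →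
      L x' ≤ E + c1 * P x' + c2 * r * q (emb x' t)) :
    ∫ x' in Ann k (4 * r / 3) (5 * r / 3), L x' ≤ E * (4 * r) ^ k
      + c1 * (∫ x' in Ann k r (2 * r), P x')
      + c2 / δ * ∫ x in {x : Fin (k + 1) → ℝ | 0 ≤ x (Fin.last k) ∧
          r ≤ Real.sqrt (∑ a, x a ^ 2) ∧ Real.sqrt (∑ a, x a ^ 2) < 2 * r}, q x := by
  set A := Ann k (4 * r / 3) (5 * r / 3) with hA
  set Ω := {x : Fin (k + 1) → ℝ | 0 ≤ x (Fin.last k) ∧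
          r ≤ Real.sqrt (∑ a, x a ^ 2) ∧ Real.sqrt (∑ a, x a ^ 2) < 2 * r} with hΩ
  have hAc : IsCompact A := Ann_compact _ _ _
  have hAm : MeasurableSet A := hAc.measurableSet
  have hLi : IntegrableOn L A := hL.continuousOn.integrableOn_compact hAc
  have hPi : IntegrableOn P A := hP.continuousOn.integrableOn_compact hAc
  have hPA : ∫ x' in A, P x' ≤ ∫ x' in Ann k r (2 * r), P x' := by
    apply setIntegral_mono_set (hP.continuousOn.integrableOn_compact (Ann_compact _ _ _))
    · exact Filter.Eventually.of_forall hP0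
    · apply LE.le.eventuallyLE
      rintro x ⟨h1, h2⟩
      exact ⟨by linarith, by linarith⟩
  -- product integral
  set I := Set.Icc (0 : ℝ) (δ * r) with hI
  have hδr : 0 < δ * r := by positivity
  have hKc : IsCompact {x : Fin (k + 1) → ℝ | 0 ≤ x (Fin.last k) ∧ x ∈ Ann (k + 1) r (2 * r)} :=
    (Ann_compact (k + 1) r (2 * r)).inter_left
      (isClosed_le continuous_const (continuous_apply (Fin.last k)))
  have hΩK : Ω ⊆ {x : Fin (k + 1) → ℝ | 0 ≤ x (Fin.last k) ∧ x ∈ Ann (k + 1) r (2 * r)} := by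
    rintro x ⟨h1, h2, h3⟩
    exact ⟨h1, h2, h3.le⟩
  have hqi : IntegrableOn q Ω :=
    ((hq.mono (fun x hx => hx.1)).integrableOn_compact hKc).mono_set hΩK
  have himg : (fun z : (Fin k → ℝ) × ℝ => emb z.1 z.2) '' (A ×ˢ I) ⊆ Ω := by
    rintro _ ⟨⟨x', t⟩, ⟨⟨h1, h2⟩, h3, h4⟩, rfl⟩
    simp only at h1 h2 h3 h4 ⊢
    have hs : 0 ≤ ∑ i, x' i ^ 2 := Finset.sum_nonneg fun i _ => sq_nonneg _
    have h5 := Real.sq_sqrt hs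
    have htr : t ≤ r := h4.trans (by nlinarith)
    refine ⟨by rw [emb_last]; exact h3, ?_, ?_⟩
    · rw [sum_sq_emb]; apply Real.le_sqrt_of_sq_le; nlinarith
    · rw [sum_sq_emb, Real.sqrt_lt' (by positivity)]; nlinarith
  have hint1 : ∫ z in A ×ˢ I, q (emb z.1 z.2) ≤ ∫ x in Ω, q x := by
    have := (emb_mp (k := k)).setIntegral_image_emb emb_me q (A ×ˢ I)
    rw [← this]
    exact setIntegral_mono_set hqi (Filter.Eventually.of_forall hq0) himg.eventuallyLE
  have hqi2 : IntegrableOn (fun z : (Fin k → ℝ) × ℝ => q (emb z.1 z.2)) (A ×ˢ I) := by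
    have hc : ContinuousOn (fun z : (Fin k → ℝ) × ℝ => q (emb z.1 z.2)) (A ×ˢ I) := by
      refine hq.comp emb_continuous.continuousOn ?_
      rintro z ⟨_, h3, _⟩
      simp only [Set.mem_ofPred_eq, emb_last]; exact h3
    exact hc.integrableOn_compact (hAc.prod isCompact_Icc)
  set F : (Fin k → ℝ) → ℝ := fun x' => L x' - E - c1 * P x' with hF
  have hFc : Continuous F := by fun_prop
  have hint2 : ∫ z in A ×ˢ I, F z.1 = (∫ x' in A, F x') * (δ * r) := by
    have := setIntegral_prod_mul (μ := (volume : Measure (Fin k → ℝ)))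
      (ν := (volume : Measure ℝ)) F (fun _ => (1 : ℝ)) A I
    simp only [mul_one] at this
    rw [Measure.volume_eq_prod, this]
    congr 1
    simp [hI, hδr.le]
  have hint3 : ∫ z in A ×ˢ I, F z.1 ≤ ∫ z in A ×ˢ I, c2 * r * q (emb z.1 z.2) := by
    refine setIntegral_mono_on ?_ (hqi2.const_mul _) (hAm.prod measurableSet_Icc) ?_
    · exact (hFc.comp continuous_fst).continuousOn.integrableOn_compact (hAc.prod isCompact_Icc)
    · rintro ⟨x', t⟩ ⟨h1, h3, h4⟩
      have := hpt x' h1 t h3 h4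
      simp only [hF]; linarith
  rw [integral_const_mul] at hint3
  have hint4 : ∫ x' in A, F x' = (∫ x' in A, L x') - E * (volume A).toReal
      - c1 * ∫ x' in A, P x' := by
    have hEi : IntegrableOn (fun _ : Fin k → ℝ => E) A :=
      continuous_const.continuousOn.integrableOn_compact hAc
    have e1 : ∫ x' in A, F x' = (∫ x' in A, (L x' - E)) - ∫ x' in A, c1 * P x' :=
      integral_sub (hLi.sub hEi) (hPi.const_mul c1)
    have e2 : ∫ x' in A, (L x' - E) = (∫ x' in A, L x') - ∫ x' in A, E := integral_sub hLi hEi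
    rw [e1, e2, integral_const_mul, setIntegral_const]
    simp [Measure.real, mul_comm]
  have hv : (volume A).toReal ≤ (4 * r) ^ k := Ann_vol k r _ _ hr (by linarith)
  have h6 : (∫ x' in A, F x') ≤ c2 / δ * ∫ x in Ω, q x := by
    have h7 : (∫ x' in A, F x') * (δ * r) ≤ c2 * r * ∫ x in Ω, q x := by
      rw [← hint2]
      exact hint3.trans (by gcongr)
    have e : c2 / δ * ∫ x in Ω, q x = (c2 * r * ∫ x in Ω, q x) / (δ * r) := by
      field_simp
    rw [e, le_div_iff₀ hδr]; exact h7
  have h8 := mul_le_mul_of_nonneg_left hv hE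
  have h9 := mul_le_mul_of_nonneg_left hPA hc1
  linarith

lemma mvt {f f' : ℝ → ℝ} {r c : ℝ} (hf : ∀ s, HasDerivAt f (f' s) s)
    (hc : ∀ s, 0 ≤ s → s ≤ r → |f' s| ≤ c) {t : ℝ} (ht : 0 ≤ t) (htr : t ≤ r) :
    |f t - f 0| ≤ c * t := by
  have h := (convex_Icc (0 : ℝ) r).norm_image_sub_le_of_norm_hasDerivWithin_le
    (f := f) (f' := f') (C := c) (fun s _ => (hf s).hasDerivWithinAt)
    (fun s hs => hc s hs.1 hs.2) (x := 0) (y := t) ⟨le_rfl, ht.trans htr⟩ ⟨ht, htr⟩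
  simpa [Real.norm_eq_abs, abs_of_nonneg ht] using h

lemma mvt' {f f' : ℝ → ℝ} {r c : ℝ} (hf : ∀ s, 0 ≤ s → HasDerivAt f (f' s) s)
    (hc : ∀ s, 0 ≤ s → s ≤ r → |f' s| ≤ c) {t : ℝ} (ht : 0 ≤ t) (htr : t ≤ r) :
    |f t - f 0| ≤ c * t := by
  have h := (convex_Icc (0 : ℝ) r).norm_image_sub_le_of_norm_hasDerivWithin_le
    (f := f) (f' := f') (C := c) (fun s hs => (hf s hs.1).hasDerivWithinAt)
    (fun s hs => hc s hs.1 hs.2) (x := 0) (y := t) ⟨le_rfl, ht.trans htr⟩ ⟨ht, htr⟩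
  simpa [Real.norm_eq_abs, abs_of_nonneg ht] using h

lemma alg_core {u0 ut a0 at' vi vj bi bj c W A P r t : ℝ} (hr : 0 < r) (ht : 0 ≤ t) (hc : 0 ≤ c)
    (hP : 0 ≤ P) (hW : 0 ≤ W) (hA : 0 ≤ A)
    (h1 : |ut - u0| ≤ P * W / r * t) (h2 : |a0| ≤ A / r) (h3 : |ut| ≤ W)
    (h4 : |at' - a0| ≤ A / r ^ 2 * t) (h5 : |vi| ≤ P * W / r) (h6 : |vj| ≤ P * W / r)
    (h7 : |bi| ≤ A / r * t) (h8 : |bj| ≤ A / r * t) :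
    (u0 * a0) ^ 2 ≤ 2 * (ut * at' - c * vi * bj - c * vj * bi) ^ 2
      + 2 * (t ^ 2 * (1 + P + 2 * c * P) ^ 2 * W ^ 2 * A ^ 2 / r ^ 4) := by
  set q := ut * at' - c * vi * bj - c * vj * bi with hq
  have hd : |u0 * a0 - q| ≤ t * (1 + P + 2 * c * P) * W * A / r ^ 2 := by
    have e : u0 * a0 - q = -((ut - u0) * a0) - ut * (at' - a0) + c * (vi * bj) + c * (vj * bi) := by
      rw [hq]; ring
    have m1 : |(ut - u0) * a0| ≤ (P * W / r * t) * (A / r) := by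
      rw [abs_mul]; gcongr
    have m2 : |ut * (at' - a0)| ≤ W * (A / r ^ 2 * t) := by
      rw [abs_mul]; gcongr
    have m3 : |c * (vi * bj)| ≤ c * ((P * W / r) * (A / r * t)) := by
      rw [abs_mul, abs_mul, abs_of_nonneg hc]; gcongr
    have m4 : |c * (vj * bi)| ≤ c * ((P * W / r) * (A / r * t)) := by
      rw [abs_mul, abs_mul, abs_of_nonneg hc]; gcongr
    have e2 : t * (1 + P + 2 * c * P) * W * A / r ^ 2 = (P * W / r * t) * (A / r)
        + W * (A / r ^ 2 * t) + c * ((P * W / r) * (A / r * t))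
        + c * ((P * W / r) * (A / r * t)) := by
      field_simp; ring
    rw [e, e2]
    rw [abs_le] at *
    constructor <;> linarith [m1.1, m1.2, m2.1, m2.2, m3.1, m3.2, m4.1, m4.2]
  have hd2 : (u0 * a0 - q) ^ 2 ≤ (t * (1 + P + 2 * c * P) * W * A / r ^ 2) ^ 2 := by
    rw [← sq_abs]; gcongr
  have e3 : (t * (1 + P + 2 * c * P) * W * A / r ^ 2) ^ 2
      = t ^ 2 * (1 + P + 2 * c * P) ^ 2 * W ^ 2 * A ^ 2 / r ^ 4 := by
    field_simp
  rw [e3] at hd2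
  nlinarith [sq_nonneg (u0 * a0 - 2 * q)]

/-- the tensor S -/
noncomputable def Sf {n : ℕ} (V : (Fin n → ℝ) → Fin n → ℝ) (a b : Fin n) (x : Fin n → ℝ) : ℝ :=
  comb (fun a b => fderiv ℝ (fun w => V w b) x (Pi.single a 1)) a b

/-- the tensor T -/
noncomputable def Tf {n : ℕ} (H : Fin n → Fin n → MvPolynomial (Fin n) ℝ)
    (V : (Fin n → ℝ) → Fin n → ℝ) (a b : Fin n) (x : Fin n → ℝ) : ℝ :=
  MvPolynomial.eval x (H a b) - Sf V a b x

lemma Sf_contDiff {n : ℕ} (V : (Fin n → ℝ) → Fin n → ℝ) (hV : ContDiff ℝ (⊤ : ℕ∞) V)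
    (a b : Fin n) : ContDiff ℝ (⊤ : ℕ∞) (Sf V a b) :=
  comb_contDiff (fun a b x => fderiv ℝ (fun w => V w b) x (Pi.single a 1))
    (fun a b => fd_contDiff _ (V_contDiff V hV b) _) a b

lemma Tf_contDiff {n : ℕ} (H : Fin n → Fin n → MvPolynomial (Fin n) ℝ)
    (V : (Fin n → ℝ) → Fin n → ℝ) (hV : ContDiff ℝ (⊤ : ℕ∞) V)
    (a b : Fin n) : ContDiff ℝ (⊤ : ℕ∞) (Tf H V a b) :=
  (poly_contDiff (H a b)).sub (Sf_contDiff V hV a b)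

lemma Tf_fd {n : ℕ} (H : Fin n → Fin n → MvPolynomial (Fin n) ℝ)
    (V : (Fin n → ℝ) → Fin n → ℝ) (hV : ContDiff ℝ (⊤ : ℕ∞) V)
    (a b e : Fin n) (x : Fin n → ℝ) :
    fderiv ℝ (Tf H V a b) x (Pi.single e 1)
      = MvPolynomial.eval x (MvPolynomial.pderiv e (H a b))
        - fderiv ℝ (Sf V a b) x (Pi.single e 1) := by
  have h : fderiv ℝ (Tf H V a b) x = _ := fderiv_fun_sub
    ((poly_contDiff (H a b)).differentiable (by simp) x)
    ((Sf_contDiff V hV a b).differentiable (by simp) x)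
  rw [h, sub_apply, poly_fderiv]

lemma Sf_fd {n : ℕ} (V : (Fin n → ℝ) → Fin n → ℝ) (hV : ContDiff ℝ (⊤ : ℕ∞) V)
    (a b e : Fin n) (x : Fin n → ℝ) :
    fderiv ℝ (Sf V a b) x (Pi.single e 1)
      = comb (fun a b => fderiv ℝ (fun y => fderiv ℝ (fun w => V w b) y (Pi.single a 1)) x
          (Pi.single e 1)) a b :=
  comb_fderiv (fun a b x => fderiv ℝ (fun w => V w b) x (Pi.single a 1)) x _
    (fun a b => (fd_contDiff _ (V_contDiff V hV b) _).differentiable (by simp) x) a b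

lemma T_bds {n d : ℕ} (hn : 0 < n) (H : Fin n → Fin n → MvPolynomial (Fin n) ℝ)
    (V : (Fin n → ℝ) → Fin n → ℝ) (hV : ContDiff ℝ (⊤ : ℕ∞) V)
    (x : Fin n → ℝ) (e : Fin n) (r B M : ℝ) (hr : 0 < r) (hx : ∀ c, |x c| ≤ 2 * r)
    (hd : ∀ a b, ∀ m ∈ (H a b).support, dg m ≤ d)
    (hM : ∀ a b, ∑ m ∈ (H a b).support, |(H a b).coeff m| * r ^ dg m ≤ M)
    (hB : ∀ k : ℕ, k ≤ 2 → ∀ dirs : Fin (k + 1) → Fin n,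
      ‖iteratedFDeriv ℝ (k + 1) V x (fun m => Pi.single (dirs m) 1)‖ * r ^ k ≤ B) (a b : Fin n) :
    |fderiv ℝ (Tf H V a b) x (Pi.single e 1)| ≤ ((d ^ 2 * 2 ^ d) * M + 4 * B) / r ∧
    |fderiv ℝ (fun y => fderiv ℝ (Tf H V a b) y (Pi.single e 1)) x (Pi.single e 1)|
      ≤ ((d ^ 2 * 2 ^ d) * M + 4 * B) / r ^ 2 := by
  have hVb := V_bds V hV x e r B hr hB
  have hM0 : 0 ≤ M := le_trans (Finset.sum_nonneg fun m _ => by positivity) (hM a b)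
  constructor
  · rw [le_div_iff₀ hr, Tf_fd H V hV, Sf_fd V hV]
    have h1 := pd_bd (H a b) (hd a b) x r hr hx e
    have h2 := comb_bd hn (fun a b => fderiv ℝ (fun y => fderiv ℝ (fun w => V w b) y
      (Pi.single a 1)) x (Pi.single e 1) * r) B
      (fun a b => by rw [abs_mul, abs_of_pos hr]; exact (hVb a b).2.1) a b
    rw [← comb_mul, abs_mul, abs_of_pos hr] at h2
    have h3 : ((d : ℝ) * 2 ^ d) * ∑ m ∈ (H a b).support, |(H a b).coeff m| * r ^ dg m
        ≤ ((d : ℝ) ^ 2 * 2 ^ d) * M := by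
      have : (d : ℝ) ≤ (d : ℝ) ^ 2 := by exact_mod_cast Nat.le_self_pow (by norm_num) d
      gcongr
      exact hM a b
    have h4 := abs_sub (MvPolynomial.eval x (MvPolynomial.pderiv e (H a b)))
      (comb (fun a b => fderiv ℝ (fun y => fderiv ℝ (fun w => V w b) y (Pi.single a 1)) x
          (Pi.single e 1)) a b)
    nlinarith [mul_le_mul_of_nonneg_right h4 hr.le]
  · rw [le_div_iff₀ (by positivity)]
    simp only [Tf_fd H V hV, Sf_fd V hV]
    have hg2 : ∀ a b, ContDiff ℝ (⊤ : ℕ∞) (fun z => fderiv ℝ (fun y => fderiv ℝ (fun w => V w b) y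
      (Pi.single a 1)) z (Pi.single e 1)) := fun a b =>
        fd_contDiff _ (fd_contDiff _ (V_contDiff V hV b) _) _
    have e1 := fderiv_fun_sub
      ((poly_contDiff (MvPolynomial.pderiv e (H a b))).differentiable (by simp) x)
      ((comb_contDiff (fun a b z => fderiv ℝ (fun y => fderiv ℝ (fun w => V w b) y
      (Pi.single a 1)) z (Pi.single e 1)) hg2 a b).differentiable (by simp) x)
    rw [e1, sub_apply, poly_fderiv, comb_fderiv (fun a b z => fderiv ℝ (fun y => fderiv ℝ
      (fun w => V w b) y (Pi.single a 1)) z (Pi.single e 1)) x _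
      (fun a b => (hg2 a b).differentiable (by simp) x)]
    have h1 := pd2_bd (H a b) (hd a b) x r hr hx e
    have hr2 : 0 < r ^ 2 := by positivity
    have h2 := comb_bd hn (fun a b => fderiv ℝ (fun z => fderiv ℝ (fun y => fderiv ℝ
      (fun w => V w b) y (Pi.single a 1)) z (Pi.single e 1)) x (Pi.single e 1) * r ^ 2) B
      (fun a b => by rw [abs_mul, abs_of_pos hr2]; exact (hVb a b).2.2) a b
    rw [← comb_mul, abs_mul, abs_of_pos hr2] at h2
    have h3 : ((d : ℝ) ^ 2 * 2 ^ d) * ∑ m ∈ (H a b).support, |(H a b).coeff m| * r ^ dg m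
        ≤ ((d : ℝ) ^ 2 * 2 ^ d) * M := by
      gcongr
      exact hM a b
    have h4 := abs_sub (MvPolynomial.eval x (MvPolynomial.pderiv e (MvPolynomial.pderiv e (H a b))))
      (comb (fun a b => fderiv ℝ (fun z => fderiv ℝ (fun y => fderiv ℝ
      (fun w => V w b) y (Pi.single a 1)) z (Pi.single e 1)) x (Pi.single e 1)) a b)
    nlinarith [mul_le_mul_of_nonneg_right h4 hr2.le]

/-- Q_{ij,n} for i,j < n -/
noncomputable def Qf {k : ℕ} (H : Fin (k + 1) → Fin (k + 1) → MvPolynomial (Fin (k + 1)) ℝ)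
    (V : (Fin (k + 1) → ℝ) → Fin (k + 1) → ℝ) (ε p c : ℝ) (i j : Fin k)
    (x : Fin (k + 1) → ℝ) : ℝ :=
  Ub ε p x * fderiv ℝ (Tf H V i.castSucc j.castSucc) x (Pi.single (Fin.last k) 1)
    - c * fderiv ℝ (Ub ε p) x (Pi.single i.castSucc 1) * Tf H V j.castSucc (Fin.last k) x
    - c * fderiv ℝ (Ub ε p) x (Pi.single j.castSucc 1) * Tf H V i.castSucc (Fin.last k) x

lemma Qf_contOn {k : ℕ} (H : Fin (k + 1) → Fin (k + 1) → MvPolynomial (Fin (k + 1)) ℝ)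
    (V : (Fin (k + 1) → ℝ) → Fin (k + 1) → ℝ) (hV : ContDiff ℝ (⊤ : ℕ∞) V)
    {ε : ℝ} (hε : 0 < ε) (p c : ℝ) (i j : Fin k) :
    ContinuousOn (Qf H V ε p c i j) {y | 0 ≤ y (Fin.last k)} := by
  have h1 := Ub_contOn (k := k) p hε
  have h2 := dUb_contOn (k := k) p hε
  have h3 : ∀ a b, Continuous (Tf H V a b) := fun a b => (Tf_contDiff H V hV a b).continuous
  have h4 := (fd_contDiff _ (Tf_contDiff H V hV i.castSucc j.castSucc)
    (Pi.single (Fin.last k) 1)).continuous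
  exact ((h1.mul h4.continuousOn).sub ((continuousOn_const.mul (h2 _)).mul
    (h3 _ _).continuousOn)).sub ((continuousOn_const.mul (h2 _)).mul (h3 _ _).continuousOn)

lemma Q_core {k d : ℕ} (H : Fin (k + 1) → Fin (k + 1) → MvPolynomial (Fin (k + 1)) ℝ)
    (V : (Fin (k + 1) → ℝ) → Fin (k + 1) → ℝ) (hV : ContDiff ℝ (⊤ : ℕ∞) V)
    {ε p c r B M : ℝ} (hε : 0 < ε) (hp : 0 ≤ p) (hc : 0 ≤ c) (hεr : ε ≤ r) (hB0 : 0 ≤ B)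
    (hd : ∀ a b, ∀ m ∈ (H a b).support, dg m ≤ d)
    (hM : ∀ a b, ∑ m ∈ (H a b).support, |(H a b).coeff m| * r ^ dg m ≤ M)
    (hHn : ∀ a, H a (Fin.last k) = 0)
    (hB : ∀ x : Fin (k + 1) → ℝ, 0 ≤ x (Fin.last k) → r ≤ Real.sqrt (∑ a, x a ^ 2) →
      Real.sqrt (∑ a, x a ^ 2) ≤ 2 * r → ∀ l : ℕ, l ≤ 2 → ∀ dirs : Fin (l + 1) → Fin (k + 1),
      ‖iteratedFDeriv ℝ (l + 1) V x (fun m => Pi.single (dirs m) 1)‖ * r ^ l ≤ B)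
    (hb1 : ∀ i : Fin k, ∀ x : Fin (k + 1) → ℝ, x (Fin.last k) = 0 →
      fderiv ℝ (fun w => V w i.castSucc) x (Pi.single (Fin.last k) 1) = 0)
    (hb2 : ∀ x : Fin (k + 1) → ℝ, x (Fin.last k) = 0 → V x (Fin.last k) = 0)
    (x' : Fin k → ℝ) (hx' : x' ∈ Ann k (4 * r / 3) (5 * r / 3)) (t : ℝ) (ht : 0 ≤ t) (htr : t ≤ r)
    (i j : Fin k) :
    (Ub ε p (emb x' 0) * fderiv ℝ (Tf H V i.castSucc j.castSucc) (emb x' 0)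
      (Pi.single (Fin.last k) 1)) ^ 2 ≤
    2 * (Qf H V ε p c i j (emb x' t)) ^ 2 + 2 * (t ^ 2 * (1 + 4 * p + 2 * c * (4 * p)) ^ 2
      * ((ε / r ^ 2) ^ p) ^ 2 * ((d ^ 2 * 2 ^ d) * M + 4 * B) ^ 2 / r ^ 4) := by
  have hr : 0 < r := by linarith
  have hM0 : 0 ≤ M := le_trans (Finset.sum_nonneg fun m _ => by positivity)
    (hM i.castSucc j.castSucc)
  have hs : 0 ≤ ∑ i, x' i ^ 2 := Finset.sum_nonneg fun i _ => sq_nonneg _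
  have h5 := Real.sq_sqrt hs
  obtain ⟨hx1, hx2⟩ := hx'
  have hs1 : r ^ 2 ≤ ∑ i, x' i ^ 2 := by nlinarith
  have hs2 : ∑ i, x' i ^ 2 ≤ 25 / 9 * r ^ 2 := by
    nlinarith [Real.sqrt_nonneg (∑ i, x' i ^ 2)]
  have hin : ∀ s, 0 ≤ s → s ≤ r → (0 ≤ emb x' s (Fin.last k)) ∧
      r ≤ Real.sqrt (∑ a, emb x' s a ^ 2) ∧ Real.sqrt (∑ a, emb x' s a ^ 2) ≤ 2 * r ∧
      ∀ c, |emb x' s c| ≤ 2 * r := by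
    intro s h0 hsr
    have hle : Real.sqrt (∑ a, emb x' s a ^ 2) ≤ 2 * r := by
      rw [sum_sq_emb, Real.sqrt_le_left (by positivity)]; nlinarith
    refine ⟨by rw [emb_last]; exact h0, ?_, hle, ?_⟩
    · rw [sum_sq_emb]; apply Real.le_sqrt_of_sq_le; nlinarith
    · intro c
      refine le_trans (Real.abs_le_sqrt ?_) hle
      exact Finset.single_le_sum (f := fun i => emb x' s i ^ 2) (fun _ _ => sq_nonneg _)
        (Finset.mem_univ c)
  set A := ((d : ℝ) ^ 2 * 2 ^ d) * M + 4 * B with hA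
  have hA0 : 0 ≤ A := by positivity
  set W := (ε / r ^ 2) ^ p with hW
  have hW0 : 0 ≤ W := by positivity
  have hTb : ∀ a b s, 0 ≤ s → s ≤ r → _ := fun a b s h0 hsr =>
    T_bds (Nat.succ_pos k) H V hV (emb x' s) (Fin.last k) r B M hr (hin s h0 hsr).2.2.2 hd hM
      (hB _ (hin s h0 hsr).1 (hin s h0 hsr).2.1 (hin s h0 hsr).2.2.1) a b
  have hUb : ∀ s, 0 ≤ s → s ≤ r → _ := fun s h0 hsr =>
    Ub_bds hp hε hεr h0 hsr x' hs1 (by nlinarith)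
  have hy : ∀ s, 0 ≤ s → 0 ≤ emb x' s (Fin.last k) := fun s h => by rw [emb_last]; exact h
  have hT0 : ∀ i : Fin k, Tf H V i.castSucc (Fin.last k) (emb x' 0) = 0 := by
    intro i
    have h0 : emb x' 0 (Fin.last k) = 0 := emb_last _ _
    simp only [Tf, hHn, Sf, comb, hb1 i _ h0, T_bdry V hV hb2 _ h0 i, Fin.castSucc_ne_last]
    simp
  have hTn : ∀ i : Fin k, |Tf H V i.castSucc (Fin.last k) (emb x' t)| ≤ A / r * t := by
    intro i
    have := mvt (f := fun s => Tf H V i.castSucc (Fin.last k) (emb x' s))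
      (fun s => comp_emb _ x' s ((Tf_contDiff H V hV _ _).differentiable (by simp) _))
      (fun s h0 hsr => (hTb _ _ s h0 hsr).1) ht htr
    simpa [hT0 i] using this
  have hdU : ∀ i : Fin k, |fderiv ℝ (Ub ε p) (emb x' t) (Pi.single i.castSucc 1)|
      ≤ 4 * p * W / r := fun i => by
    rw [le_div_iff₀ hr]; exact (hUb t ht htr).2.2 i
  unfold Qf
  refine alg_core hr ht hc (by positivity) hW0 hA0 ?_ (hTb _ _ 0 le_rfl hr.le).1 ?_ ?_
    (hdU i) (hdU j) (hTn i) (hTn j)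
  · refine mvt' (f := fun s => Ub ε p (emb x' s)) 
      (fun s h0 => comp_emb _ x' s (Ub_hasFDerivAt p hε (hy s h0)).1)
      (fun s h0 hsr => ?_) ht htr
    rw [le_div_iff₀ hr]; exact (hUb s h0 hsr).2.1
  · rw [abs_of_pos (Ub_pos p hε (hy t ht))]; exact (hUb t ht htr).1
  · exact mvt (f := fun s => fderiv ℝ (Tf H V i.castSucc j.castSucc) (emb x' s)
        (Pi.single (Fin.last k) 1))
      (fun s => comp_emb _ x' s ((fd_contDiff _ (Tf_contDiff H V hV _ _) _).differentiable
        (by simp) _))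
      (fun s h0 hsr => (hTb _ _ s h0 hsr).2) ht htr

lemma sum_ite' {k : ℕ} (f : Fin (k + 1) → Fin (k + 1) → ℝ) :
    (∑ i : Fin (k + 1), ∑ j : Fin (k + 1), if (i : ℕ) < k ∧ (j : ℕ) < k then f i j else 0)
      = ∑ i : Fin k, ∑ j : Fin k, f i.castSucc j.castSucc := by
  rw [Fin.sum_univ_castSucc]
  simp [Fin.sum_univ_castSucc]

lemma rpow_sq {x p : ℝ} {N : ℕ} (hx : 0 ≤ x) (hp : 2 * p = N) : (x ^ p) ^ 2 = x ^ N := by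
  rw [← Real.rpow_natCast, ← Real.rpow_mul hx, ← Real.rpow_natCast]
  congr 1; push_cast; linarith

/-- the boundary integrand -/
noncomputable def Pf {k : ℕ} (V : (Fin (k + 1) → ℝ) → Fin (k + 1) → ℝ) (ε p : ℝ)
    (x' : Fin k → ℝ) : ℝ :=
  (-(fderiv ℝ (Ub ε p) (emb x' 0) (Pi.single (Fin.last k) 1))) * Ub ε p (emb x' 0)
    * (Sf V (Fin.last k) (Fin.last k) (emb x' 0)) ^ 2

lemma Pf_nonneg {k : ℕ} (V : (Fin (k + 1) → ℝ) → Fin (k + 1) → ℝ) {ε p : ℝ} (hε : 0 < ε)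
    (hp : 0 ≤ p) (x' : Fin k → ℝ) : 0 ≤ Pf V ε p x' := by
  have hy : 0 ≤ emb x' 0 (Fin.last k) := by rw [emb_last]
  have hD := Dn_pos hε hy
  have hU := Ub_pos p hε hy
  unfold Pf
  rw [(Ub_hasFDerivAt p hε hy).2.1, neg_neg, emb_last, add_zero]
  positivity

lemma Pf_cont {k : ℕ} (V : (Fin (k + 1) → ℝ) → Fin (k + 1) → ℝ) (hV : ContDiff ℝ (⊤ : ℕ∞) V)
    {ε : ℝ} (hε : 0 < ε) (p : ℝ) : Continuous (Pf V ε p) := by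
  have he : Continuous (fun x' : Fin k → ℝ => emb x' 0) :=
    emb_continuous.comp (continuous_id.prodMk continuous_const)
  have hin : ∀ x' : Fin k → ℝ, emb x' 0 ∈ {y : Fin (k + 1) → ℝ | 0 ≤ y (Fin.last k)} := by
    intro x'
    simp only [Set.mem_ofPred_eq, emb_last, le_refl]
  exact (((dUb_contOn p hε (Fin.last k)).comp_continuous he hin).neg.mul
    ((Ub_contOn p hε).comp_continuous he hin)).mul
    (((Sf_contDiff V hV _ _).continuous.comp he).pow 2)

lemma ann_sq {s r : ℝ} (hr : 0 < r) (hs : 0 ≤ s) (h1 : 4 * r / 3 ≤ Real.sqrt s)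
    (h2 : Real.sqrt s ≤ 5 * r / 3) : r ^ 2 ≤ s ∧ s ≤ 4 * r ^ 2 := by
  have h5 := Real.sq_sqrt hs
  constructor
  · nlinarith
  · nlinarith [Real.sqrt_nonneg s]

lemma pt_ij {h s Tn U0 Un Snn c' r W5 q Z p2 Pv : ℝ} (hr : 0 < r)
    (hT : Tn = h - s) (hs : (U0 * s) ^ 2 ≤ c' ^ 2 * (Un ^ 2 * Snn ^ 2))
    (hU : Un ^ 2 * r * Snn ^ 2 ≤ p2 * Pv) (hW : W5 ≤ U0 ^ 2)
    (hQ : (U0 * Tn) ^ 2 ≤ 2 * q + 2 * Z) :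
    r * W5 * h ^ 2 ≤ 4 * r * q + 4 * r * Z + 2 * c' ^ 2 * p2 * Pv := by
  have h1 : (U0 * h) ^ 2 ≤ 2 * (U0 * Tn) ^ 2 + 2 * (U0 * s) ^ 2 := by
    subst hT; nlinarith [sq_nonneg (U0 * (h - s) - U0 * s)]
  have h2 : W5 * h ^ 2 ≤ (U0 * h) ^ 2 := by
    rw [mul_pow]; gcongr
  have h3 : W5 * h ^ 2 ≤ 4 * q + 4 * Z + 2 * (c' ^ 2 * (Un ^ 2 * Snn ^ 2)) := by linarith
  have h4 := mul_le_mul_of_nonneg_left h3 hr.le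
  have h5 := mul_le_mul_of_nonneg_left hU (sq_nonneg c')
  nlinarith

set_option maxHeartbeats 4000000 in
lemma core (k : ℕ) (hk : 3 ≤ k) (d : ℕ) (C₀ c c' p : ℝ) (hC₀ : 0 < C₀) (hc : 0 ≤ c)
    (hp : 2 * p = ((k - 1 : ℕ) : ℝ)) :
    ∃ C : ℝ, 0 < C ∧ ∀ ε r : ℝ, 0 < ε → ε ≤ r →
    ∀ H : Fin (k + 1) → Fin (k + 1) → MvPolynomial (Fin (k + 1)) ℝ,
    (∀ a b, ∀ m ∈ (H a b).support, dg m ≤ d) →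
    (∀ a b, H a b = H b a) →
    (∀ a, H a (Fin.last k) = 0) →
    ∀ V : (Fin (k + 1) → ℝ) → Fin (k + 1) → ℝ, ContDiff ℝ (⊤ : ℕ∞) V →
    (∀ i : Fin k, ∀ x : Fin (k + 1) → ℝ, x (Fin.last k) = 0 →
      fderiv ℝ (fun w => V w i.castSucc) x (Pi.single (Fin.last k) 1) = 0) →
    (∀ x : Fin (k + 1) → ℝ, x (Fin.last k) = 0 → V x (Fin.last k) = 0) →
    (∀ l : ℕ, l ≤ 2 → ∀ dirs : Fin (l + 1) → Fin (k + 1), ∀ x : Fin (k + 1) → ℝ,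
      0 ≤ x (Fin.last k) →
      ‖iteratedFDeriv ℝ (l + 1) V x (fun m => Pi.single (dirs m) 1)‖ ≤
        C₀ * ∑ i : Fin k, ∑ j : Fin k, ∑ m ∈ (H i.castSucc j.castSucc).support,
          |(H i.castSucc j.castSucc).coeff m| * (ε + Real.sqrt (∑ c, x c ^ 2))
            ^ ((dg m : ℤ) + 1 - ((l + 1 : ℕ) : ℤ))) →
    (∀ i j : Fin k, ∀ x : Fin (k + 1) → ℝ, x (Fin.last k) = 0 →
      fderiv ℝ (Sf V i.castSucc j.castSucc) x (Pi.single (Fin.last k) 1)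
        = c' * (Ub ε p x)⁻¹ * fderiv ℝ (Ub ε p) x (Pi.single (Fin.last k) 1)
          * Sf V (Fin.last k) (Fin.last k) x * (if i.castSucc = j.castSucc then 1 else 0)) →
    ∀ θ : ℝ, 0 < θ → θ < 1 →
      ε ^ (k - 1) * r ^ ((5 : ℤ) - 2 * ((k + 1 : ℕ) : ℤ))
        * ∫ x' in Ann k (4 * r / 3) (5 * r / 3), (∑ i : Fin k, ∑ j : Fin k,
          (MvPolynomial.eval (emb x' 0) (MvPolynomial.pderiv (Fin.last k)
            (H i.castSucc j.castSucc))) ^ 2)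
      ≤ θ * ε ^ (k - 1) * (∑ i : Fin k, ∑ j : Fin k, ∑ m ∈ (H i.castSucc j.castSucc).support,
          ((H i.castSucc j.castSucc).coeff m) ^ 2
            * r ^ (2 * (dg m : ℤ) + 2 - ((k + 1 : ℕ) : ℤ)))
        + C * (∫ x' in Ann k r (2 * r), Pf V ε p x')
        + C / θ * ∫ x in {x : Fin (k + 1) → ℝ | 0 ≤ x (Fin.last k) ∧
            r ≤ Real.sqrt (∑ a, x a ^ 2) ∧ Real.sqrt (∑ a, x a ^ 2) < 2 * r},
            ∑ i : Fin k, ∑ j : Fin k, (Qf H V ε p c i j x) ^ 2 := by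
  have hp0 : 0 ≤ p := by
    have : (0 : ℝ) ≤ ((k - 1 : ℕ) : ℝ) := Nat.cast_nonneg _
    linarith
  set K1 : ℝ := 1 + 4 * p + 2 * c * (4 * p) with hK1
  set KA : ℝ := (d : ℝ) ^ 2 * 2 ^ d + 4 * (C₀ * 3 ^ d) with hKA
  set NN : ℝ := (k : ℝ) ^ 2 * ((d + 1 : ℕ) : ℝ) ^ (k + 1) with hNN
  set F5 : ℝ := 5 ^ (k - 1) with hF5
  have hF50 : 0 < F5 := by positivity
  set C3 : ℝ := 4 * (k : ℝ) ^ 2 * F5 * K1 ^ 2 * KA ^ 2 * 4 ^ k * NN with hC3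
  have hC30 : 0 ≤ C3 := by positivity
  set c1 : ℝ := (k : ℝ) ^ 2 * F5 * (2 * c' ^ 2 * (2 * p)) with hc1
  have hc10 : 0 ≤ c1 := by positivity
  set c2 : ℝ := 4 * F5 with hc2
  have hc20 : 0 < c2 := by positivity
  have hK10 : 0 ≤ K1 := by positivity
  have hKA0 : 0 ≤ KA := by positivity
  clear_value c2 c1 C3 F5 NN KA K1
  refine ⟨c1 + c2 * (1 + C3), by positivity, ?_⟩
  intro ε r hε hεr H hd hsym hHn V hV hb1 hb2 hVb hS θ hθ hθ1
  have hr : 0 < r := by linarith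
  set Mij : Fin k → Fin k → ℝ := fun i j => ∑ m ∈ (H i.castSucc j.castSucc).support,
          |(H i.castSucc j.castSucc).coeff m| * r ^ dg m with hMij
  have hMij0 : ∀ i j, 0 ≤ Mij i j := fun i j => Finset.sum_nonneg fun m _ => by positivity
  set M : ℝ := ∑ i : Fin k, ∑ j : Fin k, Mij i j with hMdef
  have hM0 : 0 ≤ M := Finset.sum_nonneg fun i _ => Finset.sum_nonneg fun j _ => hMij0 i j
  have hM : ∀ a b, ∑ m ∈ (H a b).support, |(H a b).coeff m| * r ^ dg m ≤ M := by
    intro a b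
    refine Fin.lastCases ?_ (fun j => ?_) b
    · rw [hHn]; simpa using hM0
    · refine Fin.lastCases ?_ (fun i => ?_) a
      · rw [hsym, hHn]; simpa using hM0
      · calc Mij i j ≤ ∑ j : Fin k, Mij i j :=
            Finset.single_le_sum (f := fun j => Mij i j) (fun j _ => hMij0 i j) (Finset.mem_univ j)
          _ ≤ M := Finset.single_le_sum (f := fun i => ∑ j : Fin k, Mij i j)
            (fun i _ => Finset.sum_nonneg fun j _ => hMij0 i j) (Finset.mem_univ i)
  set Y : ℝ := ∑ i : Fin k, ∑ j : Fin k, ∑ m ∈ (H i.castSucc j.castSucc).support,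
          ((H i.castSucc j.castSucc).coeff m) ^ 2 * r ^ (2 * dg m) with hY
  have hMY : M ^ 2 ≤ NN * Y := by
    have h1 : M ^ 2 ≤ (k : ℝ) * ∑ i : Fin k, (∑ j : Fin k, Mij i j) ^ 2 := by
      simpa using sq_sum_le_card_mul_sum_sq (s := (Finset.univ : Finset (Fin k)))
        (f := fun i => ∑ j : Fin k, Mij i j)
    have h2 : ∀ i, (∑ j : Fin k, Mij i j) ^ 2 ≤ (k : ℝ) * ∑ j : Fin k, (Mij i j) ^ 2 := by
      intro i
      simpa using sq_sum_le_card_mul_sum_sq (s := (Finset.univ : Finset (Fin k)))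
        (f := fun j => Mij i j)
    have h3 : ∀ i j, (Mij i j) ^ 2 ≤ ((d + 1 : ℕ) : ℝ) ^ (k + 1) *
        ∑ m ∈ (H i.castSucc j.castSucc).support,
          ((H i.castSucc j.castSucc).coeff m) ^ 2 * r ^ (2 * dg m) := fun i j =>
      cs_poly _ (hd _ _) r
    calc M ^ 2 ≤ (k : ℝ) * ∑ i : Fin k, (∑ j : Fin k, Mij i j) ^ 2 := h1
      _ ≤ (k : ℝ) * ∑ i : Fin k, ((k : ℝ) * ∑ j : Fin k, (Mij i j) ^ 2) := by
          gcongr with i; exact h2 i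
      _ ≤ (k : ℝ) * ∑ i : Fin k, ((k : ℝ) * ∑ j : Fin k, (((d + 1 : ℕ) : ℝ) ^ (k + 1) *
        ∑ m ∈ (H i.castSucc j.castSucc).support,
          ((H i.castSucc j.castSucc).coeff m) ^ 2 * r ^ (2 * dg m))) := by
          gcongr with i _ j; exact h3 i j
      _ = NN * Y := by
          simp only [← Finset.mul_sum, hNN, hY]; ring
  have hY0 : 0 ≤ Y := Finset.sum_nonneg fun i _ => Finset.sum_nonneg fun j _ =>
    Finset.sum_nonneg fun m _ => by positivity
  clear_value Y M Mij
  set B : ℝ := C₀ * 3 ^ d * M with hBdef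
  have hB0 : 0 ≤ B := by positivity
  have hB : ∀ x : Fin (k + 1) → ℝ, 0 ≤ x (Fin.last k) → r ≤ Real.sqrt (∑ a, x a ^ 2) →
      Real.sqrt (∑ a, x a ^ 2) ≤ 2 * r → ∀ l : ℕ, l ≤ 2 → ∀ dirs : Fin (l + 1) → Fin (k + 1),
      ‖iteratedFDeriv ℝ (l + 1) V x (fun m => Pi.single (dirs m) 1)‖ * r ^ l ≤ B := by
    intro x hx hx1 hx2 l hl dirs
    refine (mul_le_mul_of_nonneg_right (hVb l hl dirs x hx) (by positivity)).trans ?_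
    rw [hBdef, mul_assoc, mul_assoc]
    apply mul_le_mul_of_nonneg_left _ hC₀.le
    simp only [hMdef, hMij, Finset.sum_mul, Finset.mul_sum]
    refine Finset.sum_le_sum fun i _ => Finset.sum_le_sum fun j _ => Finset.sum_le_sum fun m hm => ?_
    have := zpow_bd hε hεr hx1 hx2 (dg m) l d (hd _ _ m hm)
    calc _ = |(H i.castSucc j.castSucc).coeff m| * ((ε + Real.sqrt (∑ c, x c ^ 2))
            ^ ((dg m : ℤ) + 1 - ((l + 1 : ℕ) : ℤ)) * r ^ l) := by ring
      _ ≤ |(H i.castSucc j.castSucc).coeff m| * (3 ^ d * r ^ dg m) := by gcongr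
      _ = _ := by ring
  clear_value B
  set δ : ℝ := θ / (1 + C3) with hδdef
  have hδ : 0 < δ := by positivity
  have hδθ : δ ≤ θ := div_le_self hθ.le (by linarith)
  have hδ1 : δ ≤ 1 := by linarith
  clear_value δ
  set W2 : ℝ := (ε / r ^ 2) ^ (k - 1) with hW2
  have hW20 : 0 < W2 := by positivity
  have hA : (d : ℝ) ^ 2 * 2 ^ d * M + 4 * B = KA * M := by rw [hBdef, hKA]; ring
  set E : ℝ := (k : ℝ) ^ 2 * F5 * (4 * δ ^ 2 * K1 ^ 2 * W2 * (KA * M) ^ 2 / r) with hE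
  have hE0 : 0 ≤ E := by positivity
  clear_value E W2
  set q : (Fin (k + 1) → ℝ) → ℝ := fun x => ∑ i : Fin k, ∑ j : Fin k, (Qf H V ε p c i j x) ^ 2
    with hq
  set F : (Fin k → ℝ) → ℝ := fun x' => ∑ i : Fin k, ∑ j : Fin k,
          (MvPolynomial.eval (emb x' 0) (MvPolynomial.pderiv (Fin.last k)
            (H i.castSucc j.castSucc))) ^ 2 with hF
  have hqc : ContinuousOn q {x | 0 ≤ x (Fin.last k)} :=
    continuousOn_finsetSum _ fun i _ => continuousOn_finsetSum _ fun j _ =>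
      (Qf_contOn H V hV hε p c i j).pow 2
  have hq0 : ∀ x, 0 ≤ q x := fun x => Finset.sum_nonneg fun i _ => Finset.sum_nonneg
    fun j _ => sq_nonneg _
  have hFc : Continuous F := by
    have he : Continuous (fun x' : Fin k → ℝ => emb x' 0) :=
      emb_continuous.comp (continuous_id.prodMk continuous_const)
    exact continuous_finsetSum _ fun i _ => continuous_finsetSum _ fun j _ =>
      ((poly_contDiff _).continuous.comp he).pow 2
  clear_value q F
  have hpt : ∀ x' ∈ Ann k (4 * r / 3) (5 * r / 3), ∀ t, 0 ≤ t → t ≤ δ * r →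
      r * W2 * F x' ≤ E + c1 * Pf V ε p x' + c2 * r * q (emb x' t) := by
    intro x' hx' t ht htr
    have htr' : t ≤ r := htr.trans (mul_le_of_le_one_left hr.le hδ1)
    have hs : 0 ≤ ∑ i, x' i ^ 2 := Finset.sum_nonneg fun i _ => sq_nonneg _
    obtain ⟨hs1, hs2⟩ := ann_sq hr hs hx'.1 hx'.2
    obtain ⟨hb3, hb4⟩ := Ub_bdry hp0 hε hεr x' hs1 hs2
    have hU0 : 0 < Ub ε p (emb x' 0) := Ub_pos p hε (by rw [emb_last])
    have hW5 : W2 / F5 ≤ Ub ε p (emb x' 0) ^ 2 := by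
      have h6 : ((ε / (5 * r ^ 2)) ^ p) ^ 2 ≤ Ub ε p (emb x' 0) ^ 2 := by gcongr
      rw [rpow_sq (by positivity) hp] at h6
      refine le_trans (le_of_eq ?_) h6
      rw [hW2, hF5, ← div_pow]
      congr 1; field_simp
    set Z : ℝ := δ ^ 2 * K1 ^ 2 * W2 * (KA * M) ^ 2 / r ^ 2 with hZ
    clear_value Z
    have hij : ∀ i j : Fin k, r * (W2 / F5) * (MvPolynomial.eval (emb x' 0)
        (MvPolynomial.pderiv (Fin.last k) (H i.castSucc j.castSucc))) ^ 2
        ≤ 4 * r * (Qf H V ε p c i j (emb x' t)) ^ 2 + 4 * r * Z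
          + 2 * c' ^ 2 * (2 * p) * Pf V ε p x' := by
      intro i j
      refine pt_ij hr (Tf_fd H V hV i.castSucc j.castSucc (Fin.last k) (emb x' 0))
        (U0 := Ub ε p (emb x' 0))
        (Un := fderiv ℝ (Ub ε p) (emb x' 0) (Pi.single (Fin.last k) 1))
        (Snn := Sf V (Fin.last k) (Fin.last k) (emb x' 0)) ?_ ?_ hW5 ?_
      · rw [hS i j _ (emb_last _ _)]
        have h7 : ((if i.castSucc = j.castSucc then (1 : ℝ) else 0)) ^ 2 ≤ 1 := by
          split_ifs <;> simp
        set U0 := Ub ε p (emb x' 0)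
        set Un := fderiv ℝ (Ub ε p) (emb x' 0) (Pi.single (Fin.last k) 1)
        set Sn := Sf V (Fin.last k) (Fin.last k) (emb x' 0)
        set g := (if i.castSucc = j.castSucc then (1 : ℝ) else 0)
        have h8 : U0 * (c' * U0⁻¹ * Un * Sn * g) = c' * (Un * Sn) * g := by
          field_simp
        rw [h8]
        calc _ = c' ^ 2 * (Un ^ 2 * Sn ^ 2) * g ^ 2 := by ring
          _ ≤ c' ^ 2 * (Un ^ 2 * Sn ^ 2) * 1 := by gcongr
          _ = _ := by ring
      · have := mul_le_mul_of_nonneg_right hb4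
          (sq_nonneg (Sf V (Fin.last k) (Fin.last k) (emb x' 0)))
        refine this.trans (le_of_eq ?_)
        unfold Pf; ring
      · have h9 := Q_core H V hV hε hp0 hc hεr hB0 hd hM hHn hB hb1 hb2 x' hx' t ht htr' i j
        rw [hA, rpow_sq (by positivity) hp] at h9
        refine h9.trans ?_
        have h10 : t ^ 2 * (1 + 4 * p + 2 * c * (4 * p)) ^ 2 * (ε / r ^ 2) ^ (k - 1)
            * (KA * M) ^ 2 / r ^ 4 ≤ Z := by
          rw [← hK1, ← hW2]
          calc _ ≤ (δ * r) ^ 2 * K1 ^ 2 * W2 * (KA * M) ^ 2 / r ^ 4 := by gcongr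
            _ = Z := by rw [hZ]; field_simp
        linarith
    have hsum := Finset.sum_le_sum fun i (_ : i ∈ (Finset.univ : Finset (Fin k))) =>
      Finset.sum_le_sum fun j (_ : j ∈ (Finset.univ : Finset (Fin k))) => hij i j
    simp only [← Finset.mul_sum, Finset.sum_add_distrib, Finset.sum_const, Finset.card_univ,
      Fintype.card_fin, nsmul_eq_mul] at hsum
    have h11 : r * (W2 / F5) * F x' ≤ 4 * r * q (emb x' t) + k * (k * (4 * r * Z))
        + k * (k * (2 * c' ^ 2 * (2 * p) * Pf V ε p x')) := by
      have e1 : (k : ℝ) * (k * (4 * r * Z)) = 4 * r * (k * (k * Z)) := by ring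
      have e2 : (k : ℝ) * (k * (2 * c' ^ 2 * (2 * p) * Pf V ε p x'))
        = 2 * c' ^ 2 * (2 * p) * (k * (k * Pf V ε p x')) := by ring
      rw [e1, e2, hF, hq]
      exact hsum
    have h12 := mul_le_mul_of_nonneg_left h11 hF50.le
    calc r * W2 * F x' = F5 * (r * (W2 / F5) * F x') := by field_simp
      _ ≤ _ := h12
      _ = _ := by rw [hE, hc1, hc2, hZ]; field_simp; ring
  have hfin := integ hr hδ hδ1 (fun x' => r * W2 * F x') (Pf V ε p) q c1 c2 E hc10 hc20.le hE0
    (continuous_const.mul hFc) (Pf_cont V hV hε p) (Pf_nonneg V hε hp0) hqc hq0 hpt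
  rw [integral_const_mul] at hfin
  clear hpt
  have hrN : r ^ ((5 : ℤ) - 2 * ((k + 1 : ℕ) : ℤ)) = r / (r ^ 2) ^ (k - 1) := by
    have : (5 : ℤ) - 2 * ((k + 1 : ℕ) : ℤ) = 1 - ((2 * (k - 1) : ℕ) : ℤ) := by
      push_cast [Nat.cast_sub (by omega : 1 ≤ k)]; ring
    rw [this, zpow_sub₀ hr.ne', zpow_one, zpow_natCast, pow_mul]
  have hlhs : ε ^ (k - 1) * r ^ ((5 : ℤ) - 2 * ((k + 1 : ℕ) : ℤ)) = r * W2 := by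
    rw [hrN, hW2, div_pow]; ring
  have hYr : (∑ i : Fin k, ∑ j : Fin k, ∑ m ∈ (H i.castSucc j.castSucc).support,
          ((H i.castSucc j.castSucc).coeff m) ^ 2
            * r ^ (2 * (dg m : ℤ) + 2 - ((k + 1 : ℕ) : ℤ))) = Y / r ^ (k - 1) := by
    simp only [hY, Finset.sum_div]
    refine Finset.sum_congr rfl fun i _ => Finset.sum_congr rfl fun j _ =>
      Finset.sum_congr rfl fun m _ => ?_
    have : 2 * (dg m : ℤ) + 2 - ((k + 1 : ℕ) : ℤ) = ((2 * dg m : ℕ) : ℤ) - ((k - 1 : ℕ) : ℤ) := by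
      push_cast [Nat.cast_sub (by omega : 1 ≤ k)]; ring
    rw [this, zpow_sub₀ hr.ne', zpow_natCast, zpow_natCast]; ring
  rw [hlhs, hYr]
  have hIP : 0 ≤ ∫ x' in Ann k r (2 * r), Pf V ε p x' :=
    integral_nonneg (Pf_nonneg V hε hp0)
  have hIq : 0 ≤ ∫ x in {x : Fin (k + 1) → ℝ | 0 ≤ x (Fin.last k) ∧
            r ≤ Real.sqrt (∑ a, x a ^ 2) ∧ Real.sqrt (∑ a, x a ^ 2) < 2 * r}, q x :=
    integral_nonneg hq0
  have hEr : E * (4 * r) ^ k ≤ θ * ε ^ (k - 1) * (Y / r ^ (k - 1)) := by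
    have hkk : r ^ k = r ^ (k - 1) * r := by rw [← pow_succ]; congr 1; omega
    have e1 : E * (4 * r) ^ k = 4 * (k : ℝ) ^ 2 * F5 * K1 ^ 2 * KA ^ 2 * 4 ^ k * δ ^ 2
        * (ε ^ (k - 1) / r ^ (k - 1)) * M ^ 2 := by
      rw [hE, mul_pow 4 r k, hkk, hW2, div_pow ε (r ^ 2) (k - 1), ← pow_mul, mul_comm 2 (k - 1), pow_mul]
      field_simp
    rw [e1]
    have hδ2 : C3 * δ ^ 2 ≤ θ := by
      have h13 : C3 * δ ≤ θ := by
        rw [hδdef, mul_div_assoc', div_le_iff₀ (by linarith), mul_comm C3 θ]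
        exact mul_le_mul_of_nonneg_left (by linarith) hθ.le
      calc C3 * δ ^ 2 = C3 * δ * δ := by ring
        _ ≤ θ * 1 := mul_le_mul h13 hδ1 hδ.le hθ.le
        _ = θ := mul_one θ
    calc _ ≤ 4 * (k : ℝ) ^ 2 * F5 * K1 ^ 2 * KA ^ 2 * 4 ^ k * δ ^ 2
        * (ε ^ (k - 1) / r ^ (k - 1)) * (NN * Y) := by gcongr
      _ = C3 * δ ^ 2 * (ε ^ (k - 1) / r ^ (k - 1) * Y) := by rw [hC3]; ring
      _ ≤ θ * (ε ^ (k - 1) / r ^ (k - 1) * Y) := by gcongr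
      _ = _ := by ring
  have hCP : c1 * (∫ x' in Ann k r (2 * r), Pf V ε p x')
      ≤ (c1 + c2 * (1 + C3)) * (∫ x' in Ann k r (2 * r), Pf V ε p x') := by
    apply mul_le_mul_of_nonneg_right _ hIP
    have : 0 ≤ c2 * (1 + C3) := by positivity
    linarith
  have hcq : c2 / δ ≤ (c1 + c2 * (1 + C3)) / θ := by
    rw [hδdef, div_div_eq_mul_div]
    gcongr
    linarith
  have hCq := mul_le_mul_of_nonneg_right hcq hIq
  linarith

end S6

/-- with the notation of the paper (bubble `U_ε`, polynomial tensor `H` with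
coefficients `h_{ij,α}`, corrector vector field `V`, `S`, `T = H − S`, `Q_{ab,c}`, and the
boundary identity for `∂_nS_{ij}`), there is `C = C(n, C₀) > 0` such that for all
`θ ∈ (0,1)` and `r ≥ ε`:
`ε^{n−2} r^{5−2n} ∫_{4r/3≤|x̄|≤5r/3} Σ (∂_nH_{ij})² ≤ θ ε^{n−2} Σ h² r^{2|α|+2−n}
  + C ∫_{r≤|x̄|≤2r} (−∂_nU_ε) U_ε S_{nn}² + (C/θ) ∫_{B⁺_{2r}∖B⁺_r} Σ Q_{ij,n}²`. -/
theorem stmt_6 (n : ℕ) (hn : 4 ≤ n) (C₀ : ℝ) (hC₀ : 0 < C₀) :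
    ∃ C : ℝ, 0 < C ∧
    ∀ ε ρ : ℝ, 0 < ε → 0 < ρ →
    ∀ U : (Fin n → ℝ) → ℝ,
      (∀ y : Fin n → ℝ, U y =
        (ε / ((ε + y ⟨n - 1, by omega⟩) ^ 2
          + ∑ i : Fin n, if (i : ℕ) < n - 1 then y i ^ 2 else 0)) ^ (((n : ℝ) - 2) / 2)) →
    ∀ H : Fin n → Fin n → MvPolynomial (Fin n) ℝ,
      (∀ a b : Fin n, ∀ m ∈ (H a b).support,
        1 ≤ m.sum (fun _ e => e) ∧ m.sum (fun _ e => e) ≤ (n - 2) / 2) →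
      (∀ a b : Fin n, H a b = H b a) →
      ((∑ a : Fin n, H a a) = 0) →
      (∀ a : Fin n, H a ⟨n - 1, by omega⟩ = 0) →
      (∀ i j k : Fin n, (i : ℕ) < n - 1 → (j : ℕ) < n - 1 → (k : ℕ) < n - 1 →
        MvPolynomial.eval (0 : Fin n → ℝ) (MvPolynomial.pderiv k (H i j)) = 0) →
      (∀ i : Fin n, (i : ℕ) < n - 1 → ∀ x : Fin n → ℝ, x ⟨n - 1, by omega⟩ = 0 →
        (∑ j : Fin n, if (j : ℕ) < n - 1 then x j * MvPolynomial.eval x (H i j) else 0) = 0) →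
    ∀ η : ℝ → ℝ, ContDiff ℝ (⊤ : ℕ∞) η → (∀ t : ℝ, 0 ≤ η t ∧ η t ≤ 1) →
      (∀ t : ℝ, 0 ≤ t → t ≤ 4 / 3 → η t = 1) → (∀ t : ℝ, 5 / 3 ≤ t → η t = 0) →
    ∀ V : (Fin n → ℝ) → Fin n → ℝ, ContDiff ℝ (⊤ : ℕ∞) V →
      -- (i) the divergence-form equation on ℝⁿ₊
      (∀ a : Fin n, ∀ x : Fin n → ℝ, 0 ≤ x ⟨n - 1, by omega⟩ →
        (∑ b : Fin n, fderiv ℝ (fun z : Fin n → ℝ =>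
          U z ^ (2 * (n : ℝ) / ((n : ℝ) - 2))
            * (η (Real.sqrt (∑ c : Fin n, z c ^ 2) / ρ) * MvPolynomial.eval z (H a b)
              - fderiv ℝ (fun w : Fin n → ℝ => V w b) z (Pi.single a 1)
              - fderiv ℝ (fun w : Fin n → ℝ => V w a) z (Pi.single b 1)
              + 2 / (n : ℝ)
                  * (∑ c : Fin n, fderiv ℝ (fun w : Fin n → ℝ => V w c) z (Pi.single c 1))
                  * (if a = b then 1 else 0))) x (Pi.single b 1)) = 0) →
      -- (ii) the boundary conditions on ∂ℝⁿ₊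
      (∀ i : Fin n, (i : ℕ) < n - 1 → ∀ x : Fin n → ℝ, x ⟨n - 1, by omega⟩ = 0 →
        fderiv ℝ (fun w : Fin n → ℝ => V w i) x (Pi.single (⟨n - 1, by omega⟩ : Fin n) 1) = 0
          ∧ V x ⟨n - 1, by omega⟩ = 0) →
      -- (iii) the derivative bounds up to order 3 on ℝⁿ₊
      (∀ k : ℕ, k ≤ 3 → ∀ dirs : Fin k → Fin n, ∀ x : Fin n → ℝ, 0 ≤ x ⟨n - 1, by omega⟩ →
        ‖iteratedFDeriv ℝ k V x (fun m => Pi.single (dirs m) 1)‖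
          ≤ C₀ * ∑ i : Fin n, ∑ j : Fin n,
              if (i : ℕ) < n - 1 ∧ (j : ℕ) < n - 1 then
                ∑ m ∈ (H i j).support, |MvPolynomial.coeff m (H i j)|
                  * (ε + Real.sqrt (∑ c : Fin n, x c ^ 2))
                      ^ ((m.sum (fun _ e => e) : ℤ) + 1 - (k : ℤ))
              else 0) →
    ∀ S : Fin n → Fin n → (Fin n → ℝ) → ℝ,
      (∀ (a b : Fin n) (x : Fin n → ℝ), S a b x =
        fderiv ℝ (fun w : Fin n → ℝ => V w b) x (Pi.single a 1)
          + fderiv ℝ (fun w : Fin n → ℝ => V w a) x (Pi.single b 1)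
          - 2 / (n : ℝ)
              * (∑ c : Fin n, fderiv ℝ (fun w : Fin n → ℝ => V w c) x (Pi.single c 1))
              * (if a = b then 1 else 0)) →
    ∀ T : Fin n → Fin n → (Fin n → ℝ) → ℝ,
      (∀ (a b : Fin n) (x : Fin n → ℝ), T a b x = MvPolynomial.eval x (H a b) - S a b x) →
    ∀ Q : Fin n → Fin n → Fin n → (Fin n → ℝ) → ℝ,
      (∀ (a b c : Fin n) (x : Fin n → ℝ), Q a b c x =
        U x * fderiv ℝ (T a b) x (Pi.single c 1)
          - 2 / ((n : ℝ) - 2) * fderiv ℝ U x (Pi.single a 1) * T b c x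
          - 2 / ((n : ℝ) - 2) * fderiv ℝ U x (Pi.single b 1) * T a c x
          + 2 / ((n : ℝ) - 2)
              * (∑ d : Fin n, fderiv ℝ U x (Pi.single d 1) * T a d x)
              * (if b = c then 1 else 0)
          + 2 / ((n : ℝ) - 2)
              * (∑ d : Fin n, fderiv ℝ U x (Pi.single d 1) * T b d x)
              * (if a = c then 1 else 0)) →
      -- the boundary identity for ∂_nS_{ij}
      (∀ i j : Fin n, (i : ℕ) < n - 1 → (j : ℕ) < n - 1 →
        ∀ x : Fin n → ℝ, x ⟨n - 1, by omega⟩ = 0 →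
        fderiv ℝ (S i j) x (Pi.single (⟨n - 1, by omega⟩ : Fin n) 1)
          = 2 * (n : ℝ) / (((n : ℝ) - 1) * ((n : ℝ) - 2)) * (U x)⁻¹
              * fderiv ℝ U x (Pi.single (⟨n - 1, by omega⟩ : Fin n) 1)
              * S ⟨n - 1, by omega⟩ ⟨n - 1, by omega⟩ x
              * (if i = j then 1 else 0)) →
    ∀ θ : ℝ, 0 < θ → θ < 1 → ∀ r : ℝ, ε ≤ r →
      ε ^ (n - 2) * r ^ ((5 : ℤ) - 2 * (n : ℤ))
          * ∫ x' in {x' : Fin (n - 1) → ℝ |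
              4 * r / 3 ≤ Real.sqrt (∑ i : Fin (n - 1), x' i ^ 2)
                ∧ Real.sqrt (∑ i : Fin (n - 1), x' i ^ 2) ≤ 5 * r / 3},
            (∑ i : Fin n, ∑ j : Fin n,
              if (i : ℕ) < n - 1 ∧ (j : ℕ) < n - 1 then
                (MvPolynomial.eval
                    (fun a : Fin n => if h : (a : ℕ) < n - 1 then x' ⟨(a : ℕ), h⟩ else 0)
                    (MvPolynomial.pderiv (⟨n - 1, by omega⟩ : Fin n) (H i j))) ^ 2
              else 0)
        ≤ θ * ε ^ (n - 2) * (∑ i : Fin n, ∑ j : Fin n,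
              if (i : ℕ) < n - 1 ∧ (j : ℕ) < n - 1 then
                ∑ m ∈ (H i j).support,
                  (MvPolynomial.coeff m (H i j)) ^ 2
                    * r ^ (2 * (m.sum (fun _ e => e) : ℤ) + 2 - (n : ℤ))
              else 0)
          + C * (∫ x' in {x' : Fin (n - 1) → ℝ |
                r ≤ Real.sqrt (∑ i : Fin (n - 1), x' i ^ 2)
                  ∧ Real.sqrt (∑ i : Fin (n - 1), x' i ^ 2) ≤ 2 * r},
              (-(fderiv ℝ U (fun a : Fin n => if h : (a : ℕ) < n - 1 then x' ⟨(a : ℕ), h⟩ else 0)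
                    (Pi.single (⟨n - 1, by omega⟩ : Fin n) 1)))
                * U (fun a : Fin n => if h : (a : ℕ) < n - 1 then x' ⟨(a : ℕ), h⟩ else 0)
                * (S ⟨n - 1, by omega⟩ ⟨n - 1, by omega⟩
                    (fun a : Fin n => if h : (a : ℕ) < n - 1 then x' ⟨(a : ℕ), h⟩ else 0)) ^ 2)
          + C / θ * ∫ x in {x : Fin n → ℝ | 0 ≤ x ⟨n - 1, by omega⟩
                ∧ r ≤ Real.sqrt (∑ a : Fin n, x a ^ 2)
                ∧ Real.sqrt (∑ a : Fin n, x a ^ 2) < 2 * r},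
              ∑ i : Fin n, ∑ j : Fin n,
                if (i : ℕ) < n - 1 ∧ (j : ℕ) < n - 1 then
                  (Q i j ⟨n - 1, by omega⟩ x) ^ 2
                else 0 := by
  obtain ⟨k, rfl⟩ : ∃ k, n = k + 1 := ⟨n - 1, by omega⟩
  have hk : 3 ≤ k := by omega
  have hkR : (3 : ℝ) ≤ k := by exact_mod_cast hk
  obtain ⟨C, hC, key⟩ := S6.core k hk ((k + 1 - 2) / 2) C₀ (2 / (((k + 1 : ℕ) : ℝ) - 2))
    (2 * ((k + 1 : ℕ) : ℝ) / ((((k + 1 : ℕ) : ℝ) - 1) * (((k + 1 : ℕ) : ℝ) - 2)))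
    ((((k + 1 : ℕ) : ℝ) - 2) / 2) hC₀
    (by push_cast; apply div_nonneg <;> linarith)
    (by rw [Nat.cast_sub (by omega : 1 ≤ k)]; push_cast; ring)
  refine ⟨C, hC, ?_⟩
  intro ε ρ hε _ U hU H hd hsym _ hHn _ _ η _ _ _ _ V hV _ hbd hVb S hS T hT Q hQ hSn θ hθ hθ1 r hεr
  obtain rfl : U = S6.Ub ε ((((k + 1 : ℕ) : ℝ) - 2) / 2) := by
    funext y
    rw [hU y, S6.Ub, ← S6.Dn_eq]
    rfl
  obtain rfl : S = S6.Sf V := by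
    funext a b x
    rw [hS a b x]
    rfl
  obtain rfl : T = S6.Tf H V := by
    funext a b x
    rw [hT a b x]
    rfl
  have hQf : ∀ (i j : Fin k) (x : Fin (k + 1) → ℝ), Q i.castSucc j.castSucc (Fin.last k) x
      = S6.Qf H V ε ((((k + 1 : ℕ) : ℝ) - 2) / 2) (2 / (((k + 1 : ℕ) : ℝ) - 2)) i j x := by
    intro i j x
    rw [hQ, if_neg (Fin.castSucc_ne_last j), if_neg (Fin.castSucc_ne_last i), mul_zero, mul_zero,
      add_zero, add_zero]
    rfl
  have key2 := key ε r hε hεr H (fun a b m hm => (hd a b m hm).2) hsym hHn V hV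
    (fun i x hx => (hbd i.castSucc i.2 x hx).1)
    (fun x hx => (hbd (Fin.castSucc ⟨0, by omega⟩) (by simp; omega) x hx).2)
    (by
      intro l hl dirs x hx
      refine (hVb (l + 1) (by omega) dirs x hx).trans (le_of_eq ?_)
      refine congrArg (fun z => C₀ * z) ?_
      refine (S6.sum_ite' _).trans ?_
      simp only [S6.dg_cast])
    (fun i j x hx => hSn i.castSucc j.castSucc i.2 j.2 x hx) θ hθ hθ1
  refine (le_of_eq ?_).trans (key2.trans (le_of_eq ?_))
  · refine congrArg (fun z => ε ^ (k - 1) * r ^ ((5 : ℤ) - 2 * ((k + 1 : ℕ) : ℤ)) * z) ?_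
    refine integral_congr_ae (Filter.Eventually.of_forall fun x' => ?_)
    exact S6.sum_ite' (fun i j => (MvPolynomial.eval (S6.emb x' 0)
      (MvPolynomial.pderiv (Fin.last k) (H i j))) ^ 2)
  · refine congrArg₂ (· + ·) (congrArg₂ (· + ·) ?_ rfl) ?_
    · refine congrArg (fun z => θ * ε ^ (k - 1) * z) ?_
      refine Eq.symm ((S6.sum_ite' _).trans ?_)
      simp only [S6.dg_cast]
    · refine congrArg (fun z => C / θ * z) ?_
      refine integral_congr_ae (Filter.Eventually.of_forall fun x => ?_)
      refine Eq.symm ((S6.sum_ite' _).trans ?_)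
      refine Finset.sum_congr rfl fun i _ => Finset.sum_congr rfl fun j _ => ?_
      rw [← hQf i j x]
      rfl
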